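/- arXiv:2411.03158 — 2 statements merged into one kernel-verified Lean document; each statement's English description precedes it below -/
import Mathlib

section
/- Let H ⊆ B be a subspace. For each i set n_i = dim B_i, k_i = dim(pr_i H), and r_i = k_i − dim(pr_i H ∩ (pr_i H)^{⊥_i}), and let d be the number of indices i such that ⟨−,−⟩_{B_i} is symmetric and max{0, 2k_i − n_i} < r_i. Then the stabilizer S = {g ∈ Q_B : g(H) = H}, viewed as a subspace of End(B), has exactly 2^d connected components. -/
/-!
The stabilizer of `H` consists of block upper triangular maps `g` preserving `H`, whose diagonal
block at `i` is an isometry of `B_i` of determinant one preserving `W_i = pr_i H`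
(`mem_triStab_iff`). Conversely, conjugating block diagonal maps by a unitriangular map that carries
`∏ W_i` onto `H` lifts such tuples of isometries continuously (`exists_lift`), and the elements of
the stabilizer with given diagonal form an affine space. Hence the components of the stabilizer are
products of the components of the groups `StabSet (β_i) (W_i)` (`joinedIn_triStab`), and the problem
reduces to one space `V` with a form `β` and a subspace `W`. Put `U = W^⊥` and `R = W ∩ U`.

Let `g` preserve `W`, and let `E` be the generalized eigenspace of `g` for `-1`. If `E = 0`, then
`1 + g` is invertible and the Cayley transform joins `g` to `1` (`joined_of_isUnit`). In general one
looks for an infinitesimal isometry `X` of `E` that preserves `W ∩ E` and is invertible; then `h`,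
the Cayley transform of a large multiple of `X`, and `g h` both have such paths, and so does `g`
(`joined_of_parity`). Equivalently, `E` must carry a nondegenerate form of the symmetry type
opposite to `β` that pairs `W ∩ E` and `U ∩ E` to zero (`exists_form_split`). For skew `β` this is
always possible; for symmetric `β` it requires `dim E` to be even, which is the condition
`det g = 1` (`det_isometry`), and `dim (W ∩ E) + dim (R ∩ E)` to be even.

For symmetric `β` this last parity is a continuous sign character of the stabilizer, namely the
determinant of the isometry induced on `W / R` (`exists_sign`). If `max {0, 2k - n} < r`, then
neither `W` nor `U` is isotropic, and the product of a reflection in a vector of `W` with one in a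
vector of `U` has sign `-1`, so there are two components (`block_two`). Otherwise `W = R` or
`U = R`, the parity is automatically even, and the stabilizer is connected (`block_one`).
-/

open Module

/-- Left orthogonal complement `H^⊥ = {v | ⟨v,w⟩ = 0 for all w ∈ H}` of a subspace with
respect to a bilinear form. -/
def bperp {V : Type*} [AddCommGroup V] [Module ℂ V]
    (B : V →ₗ[ℂ] V →ₗ[ℂ] ℂ) (H : Submodule ℂ V) : Submodule ℂ V where
  carrier := {v | ∀ w ∈ H, B v w = 0}
  add_mem' := by
    intro a b ha hb w hw
    rw [map_add, LinearMap.add_apply, ha w hw, hb w hw, add_zero]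
  zero_mem' := by
    intro w hw
    simp
  smul_mem' := by
    intro c a ha w hw
    rw [map_smul, LinearMap.smul_apply, ha w hw, smul_zero]

/-- `B_{≤ i} = B₁ ⊕ ⋯ ⊕ B_i`, as a subspace of `B = B₁ ⊕ ⋯ ⊕ B_m` (modelled as the
product `∀ j, Bi j`): the vectors whose coordinates vanish beyond `i`. -/
def Ble {m : ℕ} (Bi : Fin m → Type*) [∀ i, AddCommGroup (Bi i)] [∀ i, Module ℂ (Bi i)]
    (i : Fin m) : Submodule ℂ (∀ j, Bi j) :=
  Submodule.pi (Set.Ioi i) (fun j => (⊥ : Submodule ℂ (Bi j)))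

/-- `B_{< i} = B₁ ⊕ ⋯ ⊕ B_{i-1}`, as a subspace of `B = B₁ ⊕ ⋯ ⊕ B_m`: the vectors whose
coordinates vanish from `i` on. -/
def Blt {m : ℕ} (Bi : Fin m → Type*) [∀ i, AddCommGroup (Bi i)] [∀ i, Module ℂ (Bi i)]
    (i : Fin m) : Submodule ℂ (∀ j, Bi j) :=
  Submodule.pi (Set.Ici i) (fun j => (⊥ : Submodule ℂ (Bi j)))

/-- `pr_i H ⊆ B_i`: the image of `H ∩ B_{≤ i}` under the projection `B_{≤ i} → B_i`
with kernel `B_{< i}` (in the product model, the `i`-th coordinate projection). -/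
def prI {m : ℕ} (Bi : Fin m → Type*) [∀ i, AddCommGroup (Bi i)] [∀ i, Module ℂ (Bi i)]
    (i : Fin m) (H : Submodule ℂ (∀ j, Bi j)) : Submodule ℂ (Bi i) :=
  Submodule.map (LinearMap.proj i : (∀ j, Bi j) →ₗ[ℂ] Bi i) (H ⊓ Ble Bi i)

/-- Membership in the group `Q_B`: a linear endomorphism `g` of `B = B₁ ⊕ ⋯ ⊕ B_m` lies in
`Q_B` if it is a linear automorphism and, for each `i`, there is an isometry `gi` of
`(B_i, ⟨-,-⟩_{B_i})` with `det gi = 1` such that `g v - gi v ∈ B_{< i}` for all `v ∈ B_i`. -/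
def memQB {m : ℕ} (Bi : Fin m → Type*) [∀ i, AddCommGroup (Bi i)] [∀ i, Module ℂ (Bi i)]
    (βi : ∀ i, Bi i →ₗ[ℂ] Bi i →ₗ[ℂ] ℂ)
    (g : (∀ j, Bi j) →ₗ[ℂ] (∀ j, Bi j)) : Prop :=
  Function.Bijective g ∧
  ∀ i, ∃ gi : Bi i ≃ₗ[ℂ] Bi i,
    (∀ x y, βi i (gi x) (gi y) = βi i x y) ∧
    LinearMap.det (gi : Bi i →ₗ[ℂ] Bi i) = 1 ∧
    ∀ v : ∀ j, Bi j, (∀ j, j ≠ i → v j = 0) →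
      g v - Pi.single i (gi (v i)) ∈ Blt Bi i


/-! ### Orthogonality and determinants for a nondegenerate form -/

section Algebra

variable {V : Type*} [AddCommGroup V] [Module ℂ V]

/-- Adjoint endomorphisms have the same determinant: a nondegenerate form conjugates the one into
the transpose of the other. -/
lemma det_eq_of_adjoint [FiniteDimensional ℂ V]
    {β : V →ₗ[ℂ] V →ₗ[ℂ] ℂ} (hnd : ∀ v, (∀ w, β v w = 0) → v = 0)
    {a b : V →ₗ[ℂ] V} (h : ∀ x y, β (a x) y = β x (b y)) :
    LinearMap.det a = LinearMap.det b := by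
  have hinj : Function.Injective β := by
    rw [injective_iff_map_eq_zero]
    intro v hv
    exact hnd v fun w => by simp [hv]
  let e : V ≃ₗ[ℂ] Dual ℂ V :=
    LinearMap.linearEquivOfInjective β hinj Subspace.dual_finrank_eq.symm
  have h1 : (b.dualMap : Dual ℂ V →ₗ[ℂ] Dual ℂ V) = e.toLinearMap ∘ₗ a ∘ₗ e.symm.toLinearMap := by
    ext φ y
    obtain ⟨x, rfl⟩ := e.surjective φ
    change e x (b y) = e (a (e.symm (e x))) y
    rw [e.symm_apply_apply]
    exact (h x y).symm
  rw [← LinearMap.det_dualMap b, h1, LinearMap.det_conj]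

lemma exists_repr [FiniteDimensional ℂ V]
    {β : V →ₗ[ℂ] V →ₗ[ℂ] ℂ} (hnd : ∀ v, (∀ w, β v w = 0) → v = 0)
    (γ : V →ₗ[ℂ] V →ₗ[ℂ] ℂ) : ∃ X : V →ₗ[ℂ] V, ∀ x y, β (X x) y = γ x y := by
  have hinj : Function.Injective β := by
    rw [injective_iff_map_eq_zero]
    intro v hv
    exact hnd v fun w => by simp [hv]
  let e : V ≃ₗ[ℂ] Dual ℂ V :=
    LinearMap.linearEquivOfInjective β hinj Subspace.dual_finrank_eq.symm
  refine ⟨e.symm.toLinearMap ∘ₗ γ, fun x y => ?_⟩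
  have : β (e.symm (γ x)) = γ x := e.apply_symm_apply (γ x)
  simp [this]

variable {β : V →ₗ[ℂ] V →ₗ[ℂ] ℂ} {σ : ℂ}

lemma form_zero_comm (hσ : ∀ x y, β x y = σ * β y x) {x y : V} (h : β x y = 0) : β y x = 0 := by
  rw [hσ, h, mul_zero]

lemma bilin_nondeg (hnd : ∀ v, (∀ w, β v w = 0) → v = 0) (hσ : ∀ x y, β x y = σ * β y x) :
    LinearMap.BilinForm.Nondegenerate (β : LinearMap.BilinForm ℂ V) :=
  ⟨fun v h => hnd v h, fun v h => hnd v fun w => form_zero_comm hσ (h w)⟩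

lemma bilin_isRefl (hσ : ∀ x y, β x y = σ * β y x) :
    LinearMap.BilinForm.IsRefl (β : LinearMap.BilinForm ℂ V) :=
  fun _ _ h => form_zero_comm hσ h

lemma bperp_eq_orthogonal (hσ : ∀ x y, β x y = σ * β y x) (W : Submodule ℂ V) :
    bperp β W = LinearMap.BilinForm.orthogonal (β : LinearMap.BilinForm ℂ V) W := by
  ext v
  rw [LinearMap.BilinForm.mem_orthogonal_iff]
  exact ⟨fun h w hw => form_zero_comm hσ (h w hw), fun h w hw => form_zero_comm hσ (h w hw)⟩

lemma finrank_bperp [FiniteDimensional ℂ V]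
    (hnd : ∀ v, (∀ w, β v w = 0) → v = 0) (hσ : ∀ x y, β x y = σ * β y x)
    (W : Submodule ℂ V) : finrank ℂ W + finrank ℂ (bperp β W) = finrank ℂ V := by
  rw [bperp_eq_orthogonal hσ, LinearMap.BilinForm.finrank_orthogonal (bilin_nondeg hnd hσ)]
  have := Submodule.finrank_le W
  omega

lemma bperp_bperp [FiniteDimensional ℂ V]
    (hnd : ∀ v, (∀ w, β v w = 0) → v = 0) (hσ : ∀ x y, β x y = σ * β y x)
    (W : Submodule ℂ V) : bperp β (bperp β W) = W := by
  rw [bperp_eq_orthogonal hσ, bperp_eq_orthogonal hσ]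
  exact LinearMap.BilinForm.orthogonal_orthogonal (bilin_nondeg hnd hσ) (bilin_isRefl hσ) W

lemma isometry_injective (hnd : ∀ v, (∀ w, β v w = 0) → v = 0) {a : V →ₗ[ℂ] V}
    (ha : ∀ x y, β (a x) (a y) = β x y) : Function.Injective a := by
  rw [injective_iff_map_eq_zero]
  intro v hv
  exact hnd v fun w => by rw [← ha, hv]; simp

/-- The eigenvalues `λ ≠ ±1` of an isometry pair off as `λ, λ⁻¹`, so its determinant is determined
by the algebraic multiplicity of `-1`. The proof compares the characteristic polynomial with its
reciprocal polynomial near `-1`. -/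
lemma det_isometry [FiniteDimensional ℂ V]
    (hnd : ∀ v, (∀ w, β v w = 0) → v = 0) {a : V →ₗ[ℂ] V}
    (ha : ∀ x y, β (a x) (a y) = β x y) :
    LinearMap.det a = (-1) ^ finrank ℂ (Module.End.maxGenEigenspace a (-1)) := by
  have hinj := isometry_injective hnd ha
  let e : V ≃ₗ[ℂ] V := LinearEquiv.ofInjectiveEndo a hinj
  have he : ∀ x, e x = a x := fun x => rfl
  set n := finrank ℂ V
  set p := LinearMap.charpoly a
  have key : ∀ t : ℂ, t ≠ 0 →
      p.eval t = LinearMap.det a * (-t) ^ n * p.eval t⁻¹ := by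
    intro t ht
    rw [LinearMap.eval_charpoly, LinearMap.eval_charpoly]
    have h1 : LinearMap.det (algebraMap ℂ (V →ₗ[ℂ] V) t * e.symm.toLinearMap - 1)
        = LinearMap.det (algebraMap ℂ (V →ₗ[ℂ] V) t * a - 1) := by
      apply det_eq_of_adjoint hnd
      intro x y
      have : β (e.symm x) y = β x (a y) := by
        rw [← ha (e.symm x), ← he (e.symm x), e.apply_symm_apply]
      simp [this, algebraMap_end_apply]
    have h2 : algebraMap ℂ (V →ₗ[ℂ] V) t - a
        = a * (algebraMap ℂ (V →ₗ[ℂ] V) t * e.symm.toLinearMap - 1) := by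
      ext x
      have : a (e.symm x) = x := e.apply_symm_apply x
      simp [algebraMap_end_apply, this]
    have h3 : algebraMap ℂ (V →ₗ[ℂ] V) t * a - 1
        = (-t) • (algebraMap ℂ (V →ₗ[ℂ] V) t⁻¹ - a) := by
      ext x
      simp [algebraMap_end_apply, smul_sub, smul_smul, ht]
      abel
    rw [h2, map_mul, h1, h3, LinearMap.det_smul, mul_assoc]
  set ν := finrank ℂ (Module.End.maxGenEigenspace a (-1)) with hν
  have hp0 : p ≠ 0 := (LinearMap.charpoly_monic a).ne_zero
  obtain ⟨q, hq, hqr⟩ := Polynomial.exists_eq_pow_rootMultiplicity_mul_and_not_dvd p hp0 (-1)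
  rw [← LinearMap.finrank_maxGenEigenspace_eq, ← hν] at hq
  have hq1 : q.eval (-1) ≠ 0 := fun h => hqr (Polynomial.dvd_iff_isRoot.mpr h)
  have key2 : ∀ t : ℂ, t ≠ 0 → t ≠ -1 →
      t ^ ν * q.eval t = LinearMap.det a * (-t) ^ n * q.eval t⁻¹ := by
    intro t ht ht1
    have h := key t ht
    rw [hq] at h
    simp only [Polynomial.eval_mul, Polynomial.eval_pow, Polynomial.eval_sub, Polynomial.eval_X,
      Polynomial.eval_C, sub_neg_eq_add] at h
    have ht2 : t + 1 ≠ 0 := fun h' => ht1 (eq_neg_of_add_eq_zero_left h')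
    have h4 : t⁻¹ + 1 = t⁻¹ * (t + 1) := by field_simp; ring
    rw [h4, mul_pow] at h
    have h5 : (t + 1) ^ ν ≠ 0 := pow_ne_zero _ ht2
    have h6 : t ^ ν * t⁻¹ ^ ν = 1 := by rw [← mul_pow, mul_inv_cancel₀ ht, one_pow]
    apply mul_left_cancel₀ h5
    linear_combination (t ^ ν) * h + LinearMap.det a * (-t) ^ n * (t + 1) ^ ν * q.eval t⁻¹ * h6
  have hcont : ContinuousAt (fun t : ℂ => t ^ ν * q.eval t
      - LinearMap.det a * (-t) ^ n * q.eval t⁻¹) (-1) := by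
    have h0 : (-1 : ℂ) ≠ 0 := by norm_num
    have h1 : ContinuousAt (fun t : ℂ => q.eval t⁻¹) (-1) :=
      ContinuousAt.comp (g := fun t => q.eval t) q.continuous.continuousAt (continuousAt_inv₀ h0)
    have h2 : ContinuousAt (fun t : ℂ => q.eval t) (-1) := q.continuous.continuousAt
    fun_prop
  have hlim : Filter.Tendsto (fun t : ℂ => t ^ ν * q.eval t
      - LinearMap.det a * (-t) ^ n * q.eval t⁻¹) (nhdsWithin (-1) {-1}ᶜ) (nhds 0) := by
    apply tendsto_const_nhds.congr'
    have h0 : ∀ᶠ t in nhdsWithin (-1 : ℂ) {-1}ᶜ, t ≠ 0 :=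
      Filter.Eventually.filter_mono nhdsWithin_le_nhds
        (isOpen_ne.mem_nhds (by norm_num : (-1 : ℂ) ≠ 0))
    filter_upwards [h0, self_mem_nhdsWithin] with t h1 h2
    rw [key2 t h1 h2, sub_self]
  have := tendsto_nhds_unique (hcont.tendsto.mono_left nhdsWithin_le_nhds) hlim
  have h7 : (-1 : ℂ)⁻¹ = -1 := by norm_num
  simp only [h7, neg_neg, one_pow, mul_one] at this
  have h8 : ((-1) ^ ν - LinearMap.det a) * q.eval (-1) = 0 := by linear_combination this
  rcases mul_eq_zero.mp h8 with h | h
  · linear_combination -h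
  · exact absurd h hq1

end Algebra

/-! ### Forms with prescribed orthogonality -/

section Forms

/-- Nondegenerate symmetric forms exist in every dimension, nondegenerate alternating ones in every
even dimension. -/
lemma exists_form {M : Type*} [AddCommGroup M] [Module ℂ M] [FiniteDimensional ℂ M] {σ : ℂ}
    (hσ : σ = 1 ∨ σ = -1) (h : σ = -1 → Even (finrank ℂ M)) :
    ∃ γ : M →ₗ[ℂ] M →ₗ[ℂ] ℂ, (∀ x y, γ x y = σ * γ y x) ∧ ∀ x, (∀ y, γ x y = 0) → x = 0 := by
  rcases hσ with rfl | rfl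
  · let e : M ≃ₗ[ℂ] (Fin (finrank ℂ M) → ℂ) := LinearEquiv.ofFinrankEq _ _ (by simp)
    refine ⟨LinearMap.mk₂ ℂ (fun x y => e x ⬝ᵥ e y) ?_ ?_ ?_ ?_, ?_, ?_⟩
    · intros; simp
    · intros; simp
    · intros; simp
    · intros; simp
    · intro x y
      simp [dotProduct_comm]
    · intro x hx
      have : e x = 0 := by
        apply dotProduct_eq_zero _
        intro w
        simpa using hx (e.symm w)
      simpa using this
  · obtain ⟨j, hj⟩ := h rfl
    let e : M ≃ₗ[ℂ] (Fin j → ℂ) × (Fin j → ℂ) := LinearEquiv.ofFinrankEq _ _ (by simp [hj])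
    refine ⟨LinearMap.mk₂ ℂ (fun x y => (e x).1 ⬝ᵥ (e y).2 - (e x).2 ⬝ᵥ (e y).1) ?_ ?_ ?_ ?_, ?_, ?_⟩
    · intros; simp; ring
    · intros; simp; ring
    · intros; simp; ring
    · intros; simp; ring
    · intro x y
      simp [dotProduct_comm]
    · intro x hx
      have h1 : (e x).1 = 0 := by
        apply dotProduct_eq_zero _
        intro w
        simpa using hx (e.symm (0, w))
      have h2 : (e x).2 = 0 := by
        apply dotProduct_eq_zero _
        intro w
        simpa using hx (e.symm (w, 0))
      have : e x = 0 := Prod.ext h1 h2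
      simpa using this

/-- Given subspaces `P, Q` of complementary dimensions, there is a nondegenerate form of prescribed
symmetry for which `P` and `Q` are orthogonal; alternating forms need a parity condition.
In a decomposition `R ⊕ M ⊕ N ⊕ R'` with `R = P ⊓ Q`, `P = R ⊕ M`, `Q = R ⊕ N`, the form pairs
`R` with `R'` and is nondegenerate on `M` and on `N`. -/
lemma exists_form_split {E : Type*} [AddCommGroup E] [Module ℂ E] [FiniteDimensional ℂ E] {σ : ℂ}
    (hσ : σ = 1 ∨ σ = -1) (P Q : Submodule ℂ E) (hdim : finrank ℂ P + finrank ℂ Q = finrank ℂ E)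
    (h : σ = -1 → Even (finrank ℂ E) ∧ Even (finrank ℂ P + finrank ℂ (P ⊓ Q : Submodule ℂ E))) :
    ∃ γ : E →ₗ[ℂ] E →ₗ[ℂ] ℂ, (∀ x y, γ x y = σ * γ y x) ∧ (∀ x, (∀ y, γ x y = 0) → x = 0) ∧
      ∀ x ∈ P, ∀ y ∈ Q, γ x y = 0 := by
  have hσ2 : σ * σ = 1 := by rcases hσ with rfl | rfl <;> norm_num
  set R := P ⊓ Q with hR
  obtain ⟨C, hC⟩ := Submodule.exists_isCompl R
  obtain ⟨R', hR'⟩ := Submodule.exists_isCompl (P ⊔ Q)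
  set M := C ⊓ P with hM
  set N := C ⊓ Q with hN
  have hRM : R ⊔ M = P := by
    rw [hM, ← sup_inf_assoc_of_le C (inf_le_left : R ≤ P), hC.sup_eq_top, top_inf_eq]
  have hRN : R ⊔ N = Q := by
    rw [hN, ← sup_inf_assoc_of_le C (inf_le_right : R ≤ Q), hC.sup_eq_top, top_inf_eq]
  have hRM' : R ⊓ M = ⊥ := by
    rw [hM, ← inf_assoc, hC.inf_eq_bot, bot_inf_eq]
  have hRN' : R ⊓ N = ⊥ := by
    rw [hN, ← inf_assoc, hC.inf_eq_bot, bot_inf_eq]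
  have d1 : finrank ℂ R + finrank ℂ M = finrank ℂ P := by
    have := Submodule.finrank_sup_add_finrank_inf_eq R M
    rw [hRM, hRM', finrank_bot] at this; omega
  have d2 : finrank ℂ R + finrank ℂ N = finrank ℂ Q := by
    have := Submodule.finrank_sup_add_finrank_inf_eq R N
    rw [hRN, hRN', finrank_bot] at this; omega
  have d3 := Submodule.finrank_sup_add_finrank_inf_eq P Q
  have d4 := Submodule.finrank_add_eq_of_isCompl hR'
  rw [← hR] at d3
  have d5 : finrank ℂ R' = finrank ℂ R := by omega
  let f : (R × M) × (N × R') →ₗ[ℂ] E :=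
    (R.subtype.coprod M.subtype).coprod (N.subtype.coprod R'.subtype)
  have hf : ∀ x, f x = (x.1.1 : E) + x.1.2 + (x.2.1 + x.2.2) := fun x => by simp [f]
  have hinj : Function.Injective f := by
    rw [injective_iff_map_eq_zero]
    rintro ⟨⟨r, u⟩, ⟨v, s⟩⟩ h0
    rw [hf] at h0
    simp only at h0
    have hr := r.2
    have hu := u.2
    have hv := v.2
    have hP : (r : E) + u ∈ P := P.add_mem hr.1 hu.2
    have hs : (s : E) = 0 := by
      have h1 : (s : E) ∈ P ⊔ Q := by
        have : (s : E) = -((r : E) + u) + -(v : E) := by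
          rw [← sub_eq_zero, ← h0]; abel
        rw [this]
        exact Submodule.add_mem_sup (P.neg_mem hP) (Q.neg_mem hv.2)
      exact (Submodule.disjoint_def.mp hR'.disjoint) _ h1 s.2
    have hv0 : (v : E) = 0 := by
      have h1 : (v : E) ∈ P := by
        have : (v : E) = -((r : E) + u) := by
          rw [hs, add_zero] at h0; exact eq_neg_of_add_eq_zero_right h0
        rw [this]
        exact P.neg_mem hP
      have : (v : E) ∈ R ⊓ N := ⟨⟨h1, hv.2⟩, hv⟩
      rw [hRN'] at this
      simpa using this
    have hu0 : (u : E) = 0 := by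
      have h1 : (u : E) ∈ R := by
        have : (u : E) = -(r : E) := by
          rw [hs, hv0, add_zero, add_zero] at h0; exact eq_neg_of_add_eq_zero_right h0
        rw [this]
        exact R.neg_mem hr
      have : (u : E) ∈ R ⊓ M := ⟨h1, hu⟩
      rw [hRM'] at this
      simpa using this
    have hr0 : (r : E) = 0 := by simpa [hs, hv0, hu0] using h0
    ext <;> simp [hs, hv0, hu0, hr0]
  let e := LinearMap.linearEquivOfInjective f hinj (by simp; omega)
  have he : ∀ x, e x = f x := fun x => rfl
  have hsymP : ∀ x ∈ P, (e.symm x).2 = 0 := by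
    intro x hx
    rw [← hRM, Submodule.mem_sup] at hx
    obtain ⟨r, hr, u, hu, rfl⟩ := hx
    have : e ((⟨r, hr⟩, ⟨u, hu⟩), (0, 0)) = r + u := by rw [he, hf]; simp
    rw [← this, e.symm_apply_apply]; rfl
  have hsymQ : ∀ x ∈ Q, (e.symm x).1.2 = 0 ∧ (e.symm x).2.2 = 0 := by
    intro x hx
    rw [← hRN, Submodule.mem_sup] at hx
    obtain ⟨r, hr, u, hu, rfl⟩ := hx
    have : e ((⟨r, hr⟩, 0), (⟨u, hu⟩, 0)) = r + u := by rw [he, hf]; simp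
    rw [← this, e.symm_apply_apply]; exact ⟨rfl, rfl⟩
  obtain ⟨γM, hM1, hM2⟩ := exists_form (M := M) hσ (fun hs => by
    obtain ⟨-, h2⟩ := h hs
    rw [← d1] at h2
    rw [Nat.even_iff] at *; omega)
  obtain ⟨γN, hN1, hN2⟩ := exists_form (M := N) hσ (fun hs => by
    obtain ⟨h1, h2⟩ := h hs
    rw [← hdim, ← d2] at h1
    rw [Nat.even_iff] at *; omega)
  let φ : R ≃ₗ[ℂ] Dual ℂ R' := LinearEquiv.ofFinrankEq _ _ (by rw [Subspace.dual_finrank_eq, d5])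
  refine ⟨LinearMap.mk₂ ℂ (fun x y => φ (e.symm x).1.1 (e.symm y).2.2
      + σ * φ (e.symm y).1.1 (e.symm x).2.2 + γM (e.symm x).1.2 (e.symm y).1.2
      + γN (e.symm x).2.1 (e.symm y).2.1) ?_ ?_ ?_ ?_, ?_, ?_, ?_⟩
  · intros; simp; ring
  · intros; simp; ring
  · intros; simp; ring
  · intros; simp; ring
  · intro x y
    simp only [LinearMap.mk₂_apply]
    rw [hM1 (e.symm x).1.2, hN1 (e.symm x).2.1]
    linear_combination -(φ (e.symm x).1.1 (e.symm y).2.2) * hσ2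
  · intro x hx
    simp only [LinearMap.mk₂_apply] at hx
    have h1 : (e.symm x).1.1 = 0 := by
      apply φ.injective
      ext s
      simpa using hx (e ((0, 0), (0, s)))
    have h2 : (e.symm x).1.2 = 0 := by
      apply hM2
      intro u
      simpa using hx (e ((0, u), (0, 0)))
    have h3 : (e.symm x).2.1 = 0 := by
      apply hN2
      intro u
      simpa using hx (e ((0, 0), (u, 0)))
    have h4 : (e.symm x).2.2 = 0 := by
      rw [← Module.forall_dual_apply_eq_zero_iff ℂ]
      intro ψ
      have hσ0 : σ ≠ 0 := left_ne_zero_of_mul_eq_one hσ2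
      have := hx (e ((φ.symm ψ, 0), (0, 0)))
      simpa [hσ0] using this
    have : e.symm x = 0 := Prod.ext (Prod.ext h1 h2) (Prod.ext h3 h4)
    simpa using this
  · intro x hx y hy
    simp [hsymP x hx, hsymQ y hy]

end Forms

/-! ### Cayley paths in the stabilizer of one subspace -/

/-- The determinant-one isometries of `(V, β)` that stabilize the subspace `W`. -/
def StabSet {V : Type*} [NormedAddCommGroup V] [NormedSpace ℂ V]
    (β : V →ₗ[ℂ] V →ₗ[ℂ] ℂ) (W : Submodule ℂ V) : Set (V →L[ℂ] V) :=
  {a | (∀ x y, β (a x) (a y) = β x y) ∧ LinearMap.det (a : V →ₗ[ℂ] V) = 1 ∧ ∀ w ∈ W, a w ∈ W}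

lemma mem_of_apply_mem {V : Type*} [AddCommGroup V] [Module ℂ V] [FiniteDimensional ℂ V]
    {W : Submodule ℂ V} {f : V →ₗ[ℂ] V} (hf : Function.Injective f) (hW : ∀ w ∈ W, f w ∈ W)
    {z : V} (hz : f z ∈ W) : z ∈ W := by
  have h1 : W.map f ≤ W := by
    rintro _ ⟨w, hw, rfl⟩
    exact hW w hw
  have h2 : W.map f = W :=
    Submodule.eq_of_le_of_finrank_eq h1 (LinearEquiv.finrank_eq (W.equivMapOfInjective f hf)).symm
  rw [← h2] at hz
  obtain ⟨w, hw, h⟩ := hz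
  rwa [← hf h]

section Cayley

variable {V : Type*} [NormedAddCommGroup V] [NormedSpace ℂ V]
  {β : V →ₗ[ℂ] V →ₗ[ℂ] ℂ} {W : Submodule ℂ V}

lemma StabSet.one_mem : (1 : V →L[ℂ] V) ∈ StabSet β W :=
  ⟨fun _ _ => rfl, LinearMap.det_id, fun _ h => h⟩

lemma StabSet.mul_mem {a b : V →L[ℂ] V} (ha : a ∈ StabSet β W) (hb : b ∈ StabSet β W) :
    a * b ∈ StabSet β W := by
  refine ⟨fun x y => ?_, ?_, fun w hw => ha.2.2 _ (hb.2.2 w hw)⟩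
  · rw [mul_apply_eq_comp, mul_apply_eq_comp, ha.1, hb.1]
  · have : ((a * b : V →L[ℂ] V) : V →ₗ[ℂ] V) = (a : V →ₗ[ℂ] V) * (b : V →ₗ[ℂ] V) := rfl
    rw [this, map_mul, ha.2.1, hb.2.1, mul_one]

lemma StabSet.joinedIn_mul_left {g a b : V →L[ℂ] V} (hg : g ∈ StabSet β W)
    (h : JoinedIn (StabSet β W) a b) : JoinedIn (StabSet β W) (g * a) (g * b) := by
  refine (h.map (f := fun x => g * x) (by fun_prop)).mono ?_
  rintro _ ⟨x, hx, rfl⟩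
  exact StabSet.mul_mem hg hx

lemma apply_inverse {f : V →L[ℂ] V} (hf : IsUnit f) (x : V) : f (Ring.inverse f x) = x :=
  congrArg (fun f : V →L[ℂ] V => f x) (Ring.mul_inverse_cancel f hf)

lemma inverse_apply {f : V →L[ℂ] V} (hf : IsUnit f) (x : V) : Ring.inverse f (f x) = x :=
  congrArg (fun f : V →L[ℂ] V => f x) (Ring.inverse_mul_cancel f hf)

variable [FiniteDimensional ℂ V]

lemma isUnit_of_injective {f : V →L[ℂ] V} (hf : Function.Injective f) : IsUnit f := by
  have : CompleteSpace V := FiniteDimensional.complete ℂ V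
  rw [ContinuousLinearMap.isUnit_iff_bijective]
  exact ⟨hf, (LinearMap.injective_iff_surjective (f := (f : V →ₗ[ℂ] V))).mp hf⟩

lemma injective_of_isUnit {f : V →L[ℂ] V} (hf : IsUnit f) : Function.Injective f := by
  have : CompleteSpace V := FiniteDimensional.complete ℂ V
  exact (ContinuousLinearMap.isUnit_iff_bijective.mp hf).1

lemma StabSet.isUnit (hnd : ∀ v, (∀ w, β v w = 0) → v = 0) {a : V →L[ℂ] V}
    (ha : a ∈ StabSet β W) : IsUnit a :=
  isUnit_of_injective (isometry_injective (a := (a : V →ₗ[ℂ] V)) hnd ha.1)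

lemma StabSet.inv_mem (hnd : ∀ v, (∀ w, β v w = 0) → v = 0) {a : V →L[ℂ] V}
    (ha : a ∈ StabSet β W) : ∃ b ∈ StabSet β W, a * b = 1 := by
  have hu := StabSet.isUnit hnd ha
  have h2 : ∀ x, a (Ring.inverse a x) = x := apply_inverse hu
  refine ⟨Ring.inverse a, ⟨fun x y => ?_, ?_, fun w hw => ?_⟩, Ring.mul_inverse_cancel a hu⟩
  · rw [← ha.1, h2, h2]
  · have : (a : V →ₗ[ℂ] V) * (Ring.inverse a : V →L[ℂ] V) = 1 := by
      ext x; exact h2 x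
    have h3 := congrArg LinearMap.det this
    rwa [map_mul, ha.2.1, one_mul, map_one] at h3
  · apply mem_of_apply_mem (f := (a : V →ₗ[ℂ] V)) (injective_of_isUnit hu) ha.2.2
    change a (Ring.inverse a w) ∈ W
    rwa [h2]

/-- The Cayley transform of a skew-adjoint endomorphism preserving `W`. -/
lemma cayley_mem (hnd : ∀ v, (∀ w, β v w = 0) → v = 0) {Y : V →L[ℂ] V}
    (hY : ∀ x y, β (Y x) y = -β x (Y y)) (hW : ∀ w ∈ W, Y w ∈ W) (hu : IsUnit (1 + Y)) :
    (1 - Y) * Ring.inverse (1 + Y) ∈ StabSet β W := by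
  refine ⟨fun x y => ?_, ?_, fun w hw => ?_⟩
  · have hx := apply_inverse hu x
    have hy := apply_inverse hu y
    set z := Ring.inverse (1 + Y) x
    set t := Ring.inverse (1 + Y) y
    have e1 : ((1 - Y) * Ring.inverse (1 + Y)) x = z - Y z := rfl
    have e2 : ((1 - Y) * Ring.inverse (1 + Y)) y = t - Y t := rfl
    have e3 : (1 + Y) z = z + Y z := rfl
    have e4 : (1 + Y) t = t + Y t := rfl
    rw [e1, e2, ← hx, ← hy, e3, e4]
    simp only [map_add, map_sub, LinearMap.add_apply, LinearMap.sub_apply]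
    rw [hY z t]
    ring
  · have h1 : LinearMap.det ((1 - Y : V →L[ℂ] V) : V →ₗ[ℂ] V)
        = LinearMap.det ((1 + Y : V →L[ℂ] V) : V →ₗ[ℂ] V) := by
      apply det_eq_of_adjoint hnd
      intro x y
      simp [hY]
    have h2 : (((1 - Y) * Ring.inverse (1 + Y) : V →L[ℂ] V) : V →ₗ[ℂ] V)
        * ((1 + Y : V →L[ℂ] V) : V →ₗ[ℂ] V) = ((1 - Y : V →L[ℂ] V) : V →ₗ[ℂ] V) := by
      ext x
      change (1 - Y) (Ring.inverse (1 + Y) ((1 + Y) x)) = (1 - Y) x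
      rw [inverse_apply hu]
    have h3 := congrArg LinearMap.det h2
    rw [map_mul, h1] at h3
    have h4 : LinearMap.det ((1 + Y : V →L[ℂ] V) : V →ₗ[ℂ] V) ≠ 0 := by
      intro h0
      have := LinearMap.bot_lt_ker_of_det_eq_zero h0
      rw [LinearMap.ker_eq_bot.mpr (injective_of_isUnit hu)] at this
      exact lt_irrefl _ this
    exact mul_right_cancel₀ h4 (by rw [h3, one_mul])
  · have hz : Ring.inverse (1 + Y) w ∈ W := by
      apply mem_of_apply_mem (f := ((1 + Y : V →L[ℂ] V) : V →ₗ[ℂ] V)) (injective_of_isUnit hu)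
      · intro w hw
        exact W.add_mem hw (hW w hw)
      · change (1 + Y) (Ring.inverse (1 + Y) w) ∈ W
        rwa [apply_inverse hu]
    exact W.sub_mem hz (hW _ hz)

lemma finite_not_isUnit (Y : V →L[ℂ] V) : {t : ℂ | ¬ IsUnit (1 + t • Y)}.Finite := by
  refine ((Module.End.finite_hasEigenvalue (Y : V →ₗ[ℂ] V)).image (fun μ => -μ⁻¹)).subset ?_
  intro t ht
  have h1 : ¬ Function.Injective (1 + t • Y : V →L[ℂ] V) := fun h => ht (isUnit_of_injective h)
  rw [injective_iff_map_eq_zero] at h1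
  push Not at h1
  obtain ⟨v, hv, hv0⟩ := h1
  have hv' : v + t • Y v = 0 := hv
  have ht0 : t ≠ 0 := by
    rintro rfl
    simp at hv'
    exact hv0 hv'
  refine ⟨-t⁻¹, ?_, by simp⟩
  apply Module.End.hasEigenvalue_of_hasEigenvector (x := v)
  rw [Module.End.hasEigenvector_iff, Module.End.mem_eigenspace_iff]
  refine ⟨?_, hv0⟩
  have : t • Y v = -v := eq_neg_of_add_eq_zero_right hv'
  rw [neg_smul, ← smul_neg, ← this, smul_smul, inv_mul_cancel₀ ht0, one_smul]
  rfl

/-- Cayley transforms are joined to `1` inside the stabilizer: scale `Y` by a path from `0` to `1`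
in `ℂ` that avoids the finitely many `t` with `1 + tY` singular. -/
lemma joined_cayley (hnd : ∀ v, (∀ w, β v w = 0) → v = 0) {Y : V →L[ℂ] V}
    (hY : ∀ x y, β (Y x) y = -β x (Y y)) (hW : ∀ w ∈ W, Y w ∈ W) (hu : IsUnit (1 + Y)) :
    JoinedIn (StabSet β W) 1 ((1 - Y) * Ring.inverse (1 + Y)) := by
  have : CompleteSpace V := FiniteDimensional.complete ℂ V
  set S := {t : ℂ | ¬ IsUnit (1 + t • Y)}
  have hS : IsPathConnected Sᶜ :=
    (finite_not_isUnit Y).countable.isPathConnected_compl_of_one_lt_rank (by simp)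
  have h0 : (0 : ℂ) ∈ Sᶜ := by simp [S]
  have h1 : (1 : ℂ) ∈ Sᶜ := by simp [S, hu]
  have hJ := (hS.joinedIn 0 h0 1 h1).map_continuousOn
    (f := fun t : ℂ => (1 - t • Y) * Ring.inverse (1 + t • Y)) (by
      intro t ht
      have ht' : IsUnit (1 + t • Y) := by simpa [S] using ht
      apply ContinuousAt.continuousWithinAt
      obtain ⟨u, hu⟩ := ht'
      have c1 : ContinuousAt (fun t : ℂ => Ring.inverse (1 + t • Y)) t := by
        apply ContinuousAt.comp (g := Ring.inverse)
        · rw [← hu]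
          exact NormedRing.inverse_continuousAt u
        · fun_prop
      exact ContinuousAt.mul (by fun_prop) c1)
  simp only [zero_smul, sub_zero, add_zero, Ring.inverse_one, mul_one, one_smul] at hJ
  refine hJ.mono ?_
  rintro _ ⟨t, ht, rfl⟩
  have ht' : IsUnit (1 + t • Y) := by simpa [S] using ht
  refine cayley_mem hnd ?_ ?_ ht'
  · intro x y
    simp [hY]
  · intro w hw
    exact W.smul_mem t (hW w hw)

/-- Elements of the stabilizer without eigenvalue `-1` are Cayley transforms. -/
lemma joined_of_isUnit (hnd : ∀ v, (∀ w, β v w = 0) → v = 0) {a : V →L[ℂ] V}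
    (ha : a ∈ StabSet β W) (hu : IsUnit (1 + a)) : JoinedIn (StabSet β W) 1 a := by
  set Y := (1 - a) * Ring.inverse (1 + a) with hYdef
  have hYa : ∀ z, Y (z + a z) = z - a z := by
    intro z
    change (1 - a) (Ring.inverse (1 + a) ((1 + a) z)) = (1 - a) z
    rw [inverse_apply hu]
  have hsurj : ∀ x, ∃ z, z + a z = x := fun x => ⟨Ring.inverse (1 + a) x, apply_inverse hu x⟩
  have hY : ∀ x y, β (Y x) y = -β x (Y y) := by
    intro x y
    obtain ⟨z, rfl⟩ := hsurj x
    obtain ⟨t, rfl⟩ := hsurj y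
    rw [hYa, hYa]
    simp only [map_add, map_sub, LinearMap.add_apply, LinearMap.sub_apply, ha.1]
    ring
  have hW : ∀ w ∈ W, Y w ∈ W := by
    intro w hw
    obtain ⟨z, rfl⟩ := hsurj w
    have hz : z ∈ W := by
      apply mem_of_apply_mem (f := ((1 + a : V →L[ℂ] V) : V →ₗ[ℂ] V)) (injective_of_isUnit hu)
      · intro w hw
        exact W.add_mem hw (ha.2.2 w hw)
      · exact hw
    rw [hYa]
    exact W.sub_mem hz (ha.2.2 z hz)
  have hu' : IsUnit (1 + Y) := by
    apply isUnit_of_injective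
    rw [injective_iff_map_eq_zero]
    intro x hx
    obtain ⟨z, rfl⟩ := hsurj x
    have h1 : (z + a z) + Y (z + a z) = 0 := hx
    rw [hYa] at h1
    have h2 : (2 : ℂ) • z = 0 := by rw [← h1, two_smul]; abel
    have h3 : z = 0 := by simpa using h2
    simp [h3]
  have hJ := joined_cayley hnd hY hW hu'
  have hfin : (1 - Y) * Ring.inverse (1 + Y) = a := by
    have h1 : (1 - Y) = a * (1 + Y) := by
      ext x
      obtain ⟨z, rfl⟩ := hsurj x
      change (z + a z) - Y (z + a z) = a ((z + a z) + Y (z + a z))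
      rw [hYa]
      simp only [map_add, map_sub]
      abel
    rw [h1, mul_assoc, Ring.mul_inverse_cancel _ hu', mul_one]
  rwa [hfin] at hJ

end Cayley

/-! ### The generalized eigenspace of `-1` -/

section Fitting

variable {V : Type*} [AddCommGroup V] [Module ℂ V] [FiniteDimensional ℂ V]

lemma lmul_apply {V : Type*} [AddCommGroup V] [Module ℂ V] (f g : V →ₗ[ℂ] V) (x : V) :
    (f * g) x = f (g x) := rfl

/-- Fitting decomposition of `g + 1`: the projection `π` onto the generalized eigenspace of `-1`
along the range of a high power `(g + 1) ^ k`. It preserves every `g`-stable subspace. -/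
lemma fitting (g : V →ₗ[ℂ] V) : ∃ k : ℕ, 1 ≤ k ∧ ∃ π : V →ₗ[ℂ] V,
    (∀ v, v ∈ Module.End.maxGenEigenspace g (-1) ↔ ((g + 1) ^ k) v = 0) ∧
    (∀ v, π v ∈ Module.End.maxGenEigenspace g (-1)) ∧
    (∀ v ∈ Module.End.maxGenEigenspace g (-1), π v = v) ∧
    (∀ v, ∃ u, v - π v = ((g + 1) ^ k) u) ∧
    (∀ u, π (((g + 1) ^ k) u) = 0) ∧
    (∀ v, π (g v) = g (π v)) ∧
    (∀ W : Submodule ℂ V, (∀ w ∈ W, g w ∈ W) → ∀ w ∈ W, π w ∈ W) := by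
  obtain ⟨k0, hk0⟩ := Filter.eventually_atTop.mp
    (LinearMap.eventually_isCompl_ker_pow_range_pow (R := ℂ) (g + 1 : Module.End ℂ V))
  set k := max k0 (finrank ℂ V + 1)
  have hc := hk0 k (le_max_left _ _)
  set f : V →ₗ[ℂ] V := (g + 1) ^ k with hf
  have hfg : ∀ v, f (g v) = g (f v) := by
    have h1 : Commute f g := by
      rw [hf]
      exact ((Commute.refl g).add_left (Commute.one_left g)).pow_left k
    intro v
    exact congrArg (fun F : V →ₗ[ℂ] V => F v) h1.eq
  have hE : ∀ v, v ∈ Module.End.maxGenEigenspace g (-1) ↔ f v = 0 := by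
    intro v
    have e1 : g - (-1 : ℂ) • (1 : Module.End ℂ V) = g + 1 := by
      rw [neg_smul, one_smul, sub_neg_eq_add]
    constructor
    · intro h
      rw [Module.End.maxGenEigenspace_eq_genEigenspace_finrank, Module.End.mem_genEigenspace_nat,
        e1, LinearMap.mem_ker] at h
      have hk : k = (k - finrank ℂ V) + finrank ℂ V :=
        (Nat.sub_add_cancel ((Nat.le_succ _).trans (le_max_right _ _))).symm
      rw [hf, hk, pow_add, lmul_apply, h, map_zero]
    · intro h
      rw [Module.End.mem_maxGenEigenspace]
      exact ⟨k, by rw [e1]; exact h⟩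
  refine ⟨k, (Nat.succ_le_succ (Nat.zero_le _)).trans (le_max_right _ _),
    (LinearMap.ker f).subtype ∘ₗ Submodule.projectionOnto _ _ hc, hE, ?_⟩
  set π : V →ₗ[ℂ] V := (LinearMap.ker f).subtype ∘ₗ Submodule.projectionOnto _ _ hc with hπ
  have h1 : ∀ v, f (π v) = 0 := fun v =>
    LinearMap.mem_ker.mp (Submodule.projectionOnto _ _ hc v).2
  have h2 : ∀ v, f v = 0 → π v = v := by
    intro v hv
    have := Submodule.projectionOnto_apply_left hc ⟨v, LinearMap.mem_ker.mpr hv⟩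
    rw [hπ, LinearMap.comp_apply]
    exact congrArg Subtype.val this
  have h3 : ∀ u, π (f u) = 0 := by
    intro u
    have := Submodule.projectionOnto_apply_right hc ⟨f u, ⟨u, rfl⟩⟩
    rw [hπ, LinearMap.comp_apply]
    exact congrArg Subtype.val this
  have h4 : ∀ v, ∃ u, v - π v = f u := by
    intro v
    obtain ⟨x, hx, y, ⟨u, hu⟩, hxy⟩ := Submodule.mem_sup.mp
      (show v ∈ LinearMap.ker f ⊔ LinearMap.range f by rw [hc.sup_eq_top]; trivial)
    refine ⟨u, ?_⟩
    have : π v = x := by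
      rw [← hxy, map_add, h2 x (LinearMap.mem_ker.mp hx), ← hu, h3, add_zero]
    rw [this, hu, ← hxy, add_sub_cancel_left]
  refine ⟨fun v => (hE _).mpr (h1 v), fun v hv => h2 v ((hE v).mp hv), h4, h3, ?_, ?_⟩
  · intro v
    obtain ⟨u, hu⟩ := h4 v
    have hv : v = π v + f u := by rw [← hu]; abel
    have h5 : g v = g (π v) + f (g u) := by
      conv_lhs => rw [hv]
      rw [map_add, hfg]
    rw [h5, map_add, h3, add_zero, h2]
    rw [hfg, h1, map_zero]
  · intro W hW w hw
    have hfW : ∀ w ∈ W, f w ∈ W := by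
      have : ∀ j : ℕ, ∀ w ∈ W, ((g + 1) ^ j) w ∈ W := by
        intro j
        induction j with
        | zero => intro w hw; simpa using hw
        | succ j ih =>
          intro w hw
          rw [pow_succ, lmul_apply]
          exact ih _ (W.add_mem (hW w hw) hw)
      exact this k
    -- `f` is injective, hence bijective, on `f(W)`, so `f w = f (f w')` with `w' ∈ W`.
    set W' := W.map f
    have hst : ∀ x ∈ W', f x ∈ W' := by
      rintro _ ⟨x, hx, rfl⟩
      exact ⟨f x, hfW x hx, rfl⟩
    have hinj : Function.Injective (f.restrict hst) := by
      rw [injective_iff_map_eq_zero]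
      rintro ⟨x, hx⟩ h0
      have h0' : f x = 0 := congrArg Subtype.val h0
      obtain ⟨y, hy, rfl⟩ := hx
      have := h2 _ h0'
      rw [h3] at this
      exact Subtype.ext this.symm
    obtain ⟨⟨_, ⟨w', hw', rfl⟩⟩, hx⟩ :=
      (LinearMap.injective_iff_surjective (f := f.restrict hst)).mp hinj ⟨f w, w, hw, rfl⟩
    have hx' : f (f w') = f w := congrArg Subtype.val hx
    have h6 : w = (w - f w') + f w' := by abel
    rw [h6, map_add, h3, add_zero, h2 _ (by rw [map_sub, hx', sub_self])]
    exact W.sub_mem hw (hfW w' hw')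

lemma ortho_pow {β : V →ₗ[ℂ] V →ₗ[ℂ] ℂ} (hnd : ∀ v, (∀ w, β v w = 0) → v = 0)
    {g : V →ₗ[ℂ] V} (hg : ∀ x y, β (g x) (g y) = β x y) (k : ℕ) :
    ∀ e u, ((g + 1) ^ k) e = 0 → β e (((g + 1) ^ k) u) = 0 := by
  have hinj := isometry_injective hnd hg
  induction k with
  | zero => intro e u h; simp at h; simp [h]
  | succ k ih =>
    intro e u h
    obtain ⟨z, rfl⟩ := LinearMap.injective_iff_surjective.mp hinj e
    have hcomm : Commute ((g + 1) ^ (k + 1)) g :=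
      ((Commute.refl g).add_left (Commute.one_left g)).pow_left _
    have h1 : ((g + 1) ^ (k + 1)) (g z) = g (((g + 1) ^ (k + 1)) z) :=
      congrArg (fun F : V →ₗ[ℂ] V => F z) hcomm.eq
    have h2 : ((g + 1) ^ k) ((g + 1) z) = 0 := by
      rw [← lmul_apply, ← pow_succ]
      apply hinj
      rw [← h1, h, map_zero]
    have h3 := ih _ u h2
    rw [pow_succ', lmul_apply]
    set y := ((g + 1) ^ k) u
    have e1 : (g + 1) z = g z + z := rfl
    have e2 : (g + 1) y = g y + y := rfl
    rw [e1, map_add, LinearMap.add_apply] at h3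
    rw [e2, map_add, hg, ← h3]
    ring

end Fitting

/-! ### Connecting a stabilizing isometry to the identity -/

lemma stab_perp {V : Type*} [AddCommGroup V] [Module ℂ V] [FiniteDimensional ℂ V]
    {β : V →ₗ[ℂ] V →ₗ[ℂ] ℂ} (hnd : ∀ v, (∀ w, β v w = 0) → v = 0)
    {g : V →ₗ[ℂ] V} (hg : ∀ x y, β (g x) (g y) = β x y) {W : Submodule ℂ V}
    (hW : ∀ w ∈ W, g w ∈ W) : ∀ u ∈ bperp β W, g u ∈ bperp β W := by
  have hinj := isometry_injective hnd hg
  intro u hu w hw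
  obtain ⟨z, rfl⟩ := (LinearMap.injective_iff_surjective.mp hinj) w
  rw [hg]
  exact hu z (mem_of_apply_mem hinj hW hw)

lemma finrank_comap_subtype {V : Type*} [AddCommGroup V] [Module ℂ V] [FiniteDimensional ℂ V]
    (E W : Submodule ℂ V) :
    finrank ℂ (W.comap E.subtype) = finrank ℂ (W ⊓ E : Submodule ℂ V) := by
  rw [inf_comm, ← Submodule.map_comap_subtype, Submodule.finrank_map_subtype_eq]

section Orthogonal

variable {V : Type*} [AddCommGroup V] [Module ℂ V] [FiniteDimensional ℂ V]
  {β : V →ₗ[ℂ] V →ₗ[ℂ] ℂ} {W : Submodule ℂ V} {σ : ℂ}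

lemma proj_self_adjoint (hnd : ∀ v, (∀ w, β v w = 0) → v = 0)
    (hσ : ∀ x y, β x y = σ * β y x) {g : V →ₗ[ℂ] V} (hg : ∀ x y, β (g x) (g y) = β x y)
    {k : ℕ} {π : V →ₗ[ℂ] V}
    (hE : ∀ v, v ∈ Module.End.maxGenEigenspace g (-1) ↔ ((g + 1) ^ k) v = 0)
    (hπE : ∀ v, π v ∈ Module.End.maxGenEigenspace g (-1))
    (hπ2 : ∀ v, ∃ u, v - π v = ((g + 1) ^ k) u) : ∀ x y, β (π x) y = β x (π y) := by
  have h1 : ∀ x y, β (π x) y = β (π x) (π y) := by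
    intro x y
    obtain ⟨u, hu⟩ := hπ2 y
    rw [← sub_eq_zero, ← map_sub, hu]
    exact ortho_pow hnd hg k _ _ ((hE _).mp (hπE x))
  intro x y
  rw [h1 x y, hσ x (π y), h1 y x, ← hσ]

/-- Inside the nondegenerate space `E = maxGenEigenspace g (-1)`, the subspaces `W ⊓ E` and
`bperp β W ⊓ E` are mutually orthogonal complements. -/
lemma finrank_inf_genEig (hnd : ∀ v, (∀ w, β v w = 0) → v = 0)
    (hσ : ∀ x y, β x y = σ * β y x) {g : V →ₗ[ℂ] V} (hg : ∀ x y, β (g x) (g y) = β x y)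
    (hW : ∀ w ∈ W, g w ∈ W) :
    finrank ℂ (W ⊓ Module.End.maxGenEigenspace g (-1) : Submodule ℂ V) +
      finrank ℂ (bperp β W ⊓ Module.End.maxGenEigenspace g (-1) : Submodule ℂ V) =
      finrank ℂ (Module.End.maxGenEigenspace g (-1)) := by
  obtain ⟨k, hk, π, hE, hπE, hπ1, hπ2, hπ3, hπg, hπW⟩ := fitting g
  have hsa := proj_self_adjoint hnd hσ hg hE hπE hπ2
  set E := Module.End.maxGenEigenspace g (-1) with hEdef
  let βE : E →ₗ[ℂ] E →ₗ[ℂ] ℂ := β.compl₁₂ E.subtype E.subtype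
  have hβE : ∀ x y : E, βE x y = β x y := fun x y => rfl
  have hndE : ∀ v, (∀ w, βE v w = 0) → v = 0 := by
    intro v h
    ext
    refine hnd _ fun w => ?_
    have := h ⟨π w, hπE w⟩
    rw [hβE] at this
    rw [← hπ1 v v.2, hsa]
    exact this
  have hσE : ∀ x y, βE x y = σ * βE y x := fun x y => hσ _ _
  have hperpE : bperp βE (W.comap E.subtype) = (bperp β W).comap E.subtype := by
    ext e
    constructor
    · intro h w hw
      have := h ⟨π w, hπE w⟩ (hπW W hW w hw)
      rw [hβE] at this
      change β (e : V) w = 0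
      rw [← hπ1 e e.2, hsa]
      exact this
    · intro h w hw
      exact h w hw
  have hdim := finrank_bperp hndE hσE (W.comap E.subtype)
  rw [hperpE, finrank_comap_subtype, finrank_comap_subtype] at hdim
  exact hdim

lemma even_genEig (hnd : ∀ v, (∀ w, β v w = 0) → v = 0)
    {g : V →ₗ[ℂ] V} (hg : ∀ x y, β (g x) (g y) = β x y) (hdet : LinearMap.det g = 1) :
    Even (finrank ℂ (Module.End.maxGenEigenspace g (-1))) := by
  have := det_isometry hnd hg
  rw [hdet] at this
  by_contra h
  rw [Nat.not_even_iff_odd] at h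
  rw [h.neg_one_pow] at this
  norm_num at this

end Orthogonal

section Key

variable {V : Type*} [NormedAddCommGroup V] [NormedSpace ℂ V] [FiniteDimensional ℂ V]
  {β : V →ₗ[ℂ] V →ₗ[ℂ] ℂ} {W : Submodule ℂ V} {σ : ℂ}

/-- On the generalized `(-1)`-eigenspace `E` of `g` there is, under the parity hypothesis, an
invertible infinitesimal isometry `X` preserving `W`; extended by zero, it is recorded here together
with the projection `π` onto `E`. -/
lemma exists_skew (hnd : ∀ v, (∀ w, β v w = 0) → v = 0) (hσ1 : σ = 1 ∨ σ = -1)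
    (hσ : ∀ x y, β x y = σ * β y x) {g : V →ₗ[ℂ] V} (hg : ∀ x y, β (g x) (g y) = β x y)
    (hdet : LinearMap.det g = 1) (hW : ∀ w ∈ W, g w ∈ W)
    (hpar : σ = 1 → Even (finrank ℂ (W ⊓ Module.End.maxGenEigenspace g (-1) : Submodule ℂ V) +
      finrank ℂ ((W ⊓ bperp β W) ⊓ Module.End.maxGenEigenspace g (-1) : Submodule ℂ V))) :
    ∃ X π : V →ₗ[ℂ] V, (∀ x y, β (X x) y = -β x (X y)) ∧ (∀ w ∈ W, X w ∈ W) ∧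
      (∀ v, π (π v) = π v) ∧ (∀ v, X (π v) = X v) ∧ (∀ v, π (X v) = X v) ∧
      (∀ v, X v = 0 → π v = 0) ∧ (∀ v, π (g v) = g (π v)) ∧
      (∀ v, g (π v) = π v → π v = 0) ∧ (∀ v, g v = -v → π v = v) := by
  have hσ2 : σ * σ = 1 := by rcases hσ1 with rfl | rfl <;> norm_num
  obtain ⟨k, hk, π, hE, hπE, hπ1, hπ2, hπ3, hπg, hπW⟩ := fitting g
  set E := Module.End.maxGenEigenspace g (-1) with hEdef
  have hsa := proj_self_adjoint hnd hσ hg hE hπE hπ2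
  have hU := stab_perp hnd hg hW
  set U := bperp β W with hUdef
  have hππ : ∀ v, π (π v) = π v := fun v => hπ1 _ (hπE v)
  have hdim : finrank ℂ (W.comap E.subtype) + finrank ℂ (U.comap E.subtype) = finrank ℂ E := by
    rw [finrank_comap_subtype, finrank_comap_subtype]
    exact finrank_inf_genEig hnd hσ hg hW
  have hEeven := even_genEig hnd hg hdet
  obtain ⟨γ, hγ, hγnd, hγ0⟩ := exists_form_split (σ := -σ)
    (by rcases hσ1 with rfl | rfl <;> simp) (W.comap E.subtype) (U.comap E.subtype) hdim
    (by
      intro h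
      have h1 : σ = 1 := by linear_combination -h
      refine ⟨hEeven, ?_⟩
      rw [← Submodule.comap_inf, finrank_comap_subtype, finrank_comap_subtype]
      exact hpar h1)
  let πE : V →ₗ[ℂ] E := π.codRestrict E hπE
  have hπEval : ∀ v, (πE v : V) = π v := fun v => rfl
  obtain ⟨X, hX⟩ := exists_repr hnd (γ.compl₁₂ πE πE)
  have hX' : ∀ x y, β (X x) y = γ (πE x) (πE y) := hX
  have hπEπ : ∀ v, πE (π v) = πE v := fun v => Subtype.ext (hππ v)
  have inj : ∀ x y, (∀ w, β x w = β y w) → x = y := fun x y h =>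
    sub_eq_zero.mp (hnd _ fun w => by rw [map_sub, LinearMap.sub_apply, h, sub_self])
  refine ⟨X, π, ?_, ?_, hππ, ?_, ?_, ?_, hπg, ?_, ?_⟩
  · intro x y
    rw [hX', hγ, hσ x (X y), hX']
    ring
  · intro w hw
    rw [← bperp_bperp hnd hσ W]
    intro u hu
    rw [hX']
    exact hγ0 _ (hπW W hW w hw) _ (hπW U hU u hu)
  · intro v
    exact inj _ _ fun w => by rw [hX', hX', hπEπ]
  · intro v
    exact inj _ _ fun w => by rw [hsa, hX', hX', hπEπ]
  · intro v hv
    have : πE v = 0 := hγnd _ fun y => by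
      have := hX' v y
      rw [hv, map_zero, LinearMap.zero_apply] at this
      rw [this]
      congr 1
      exact Subtype.ext (hπ1 y y.2).symm
    rw [← hπEval, this]; rfl
  · intro v hv
    have hpow : ∀ j : ℕ, ((g + 1) ^ j) (π v) = (2 : ℂ) ^ j • π v := by
      intro j
      induction j with
      | zero => simp
      | succ j ih =>
        rw [pow_succ, lmul_apply]
        have : (g + 1) (π v) = (2 : ℂ) • π v := by
          rw [LinearMap.add_apply, hv, two_smul]; rfl
        rw [this, map_smul, ih, smul_smul, pow_succ, mul_comm]
    have h0 := (hE _).mp (hπE v)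
    rw [hpow] at h0
    exact (smul_eq_zero.mp h0).resolve_left (pow_ne_zero _ two_ne_zero)
  · intro v hv
    refine hπ1 v ((hE v).mpr ?_)
    obtain ⟨j, rfl⟩ := Nat.exists_eq_add_of_le' hk
    rw [pow_succ, lmul_apply]
    have : (g + 1) v = 0 := by
      rw [LinearMap.add_apply, hv]; simp
    rw [this, map_zero]

/-- Multiplying `g` by the Cayley transform `h` of a large multiple of the `X` of `exists_skew` removes
the eigenvalue `-1`, so that both `h` and `g * h` are joined to `1`. -/
lemma joined_of_parity (hnd : ∀ v, (∀ w, β v w = 0) → v = 0) (hσ1 : σ = 1 ∨ σ = -1)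
    (hσ : ∀ x y, β x y = σ * β y x) {g : V →L[ℂ] V} (hg : g ∈ StabSet β W)
    (hpar : σ = 1 →
      Even (finrank ℂ (W ⊓ Module.End.maxGenEigenspace (g : V →ₗ[ℂ] V) (-1) : Submodule ℂ V) +
      finrank ℂ ((W ⊓ bperp β W) ⊓
        Module.End.maxGenEigenspace (g : V →ₗ[ℂ] V) (-1) : Submodule ℂ V))) :
    JoinedIn (StabSet β W) 1 g := by
  have : CompleteSpace V := FiniteDimensional.complete ℂ V
  obtain ⟨X', π', hskew, hXW, hππ, hXπ, hπX, hX0, hπg, hπ1, hπ2⟩ :=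
    exists_skew hnd hσ1 hσ hg.1 hg.2.1 hg.2.2 hpar
  let X : V →L[ℂ] V := LinearMap.toContinuousLinearMap X'
  let π : V →L[ℂ] V := LinearMap.toContinuousLinearMap π'
  replace hskew : ∀ x y, β (X x) y = -β x (X y) := hskew
  replace hXW : ∀ w ∈ W, X w ∈ W := hXW
  replace hππ : ∀ v, π (π v) = π v := hππ
  replace hXπ : ∀ v, X (π v) = X v := hXπ
  replace hπX : ∀ v, π (X v) = X v := hπX
  replace hX0 : ∀ v, X v = 0 → π v = 0 := hX0
  replace hπg : ∀ v, π (g v) = g (π v) := hπg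
  replace hπ1 : ∀ v, g (π v) = π v → π v = 0 := hπ1
  replace hπ2 : ∀ v, g v = -v → π v = v := hπ2
  let T : ℂ → (V →L[ℂ] V) := fun s => (1 - g) * X + (1 + g) * (s • π + (1 - π))
  have hT : ∀ s v, T s v = (X v - g (X v)) + ((s • π v + (v - π v)) + g (s • π v + (v - π v))) :=
    fun s v => rfl
  have hTc : Continuous T := by fun_prop
  have hT0 : IsUnit (T 0) := by
    refine isUnit_of_injective ((injective_iff_map_eq_zero (T 0)).mpr fun v hv => ?_)
    rw [hT, zero_smul, zero_add] at hv
    have h1 := congrArg π hv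
    simp only [map_add, map_sub, hπX, hπg, hππ, sub_self, map_zero, add_zero] at h1
    have h2 : X v = 0 := by
      rw [← hπX]
      refine hπ1 _ ?_
      rw [hπX]
      exact (sub_eq_zero.mp h1).symm
    have h3 := hX0 v h2
    rw [h2, h3] at hv
    simp only [map_zero, sub_zero, zero_add] at hv
    rw [← hπ2 v (eq_neg_of_add_eq_zero_right hv), h3]
  have hopen : {s | IsUnit (T s)} ∈ nhds (0 : ℂ) :=
    (Units.isOpen.preimage hTc).mem_nhds hT0
  -- avoid `s = 0` and those `s` for which `1 + s⁻¹ • X` is singular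
  obtain ⟨s, hs, hsF⟩ := ((infinite_of_mem_nhds 0 hopen).sdiff
    (((finite_not_isUnit X).image (fun t => t⁻¹)).union (Set.finite_singleton 0))).nonempty
  have hs0 : s ≠ 0 := fun h => hsF (Or.inr h)
  have hu : IsUnit (1 + s⁻¹ • X) := by
    by_contra h
    exact hsF (Or.inl ⟨s⁻¹, h, inv_inv s⟩)
  have hZskew : ∀ x y, β ((s⁻¹ • X) x) y = -β x ((s⁻¹ • X) y) := by
    intro x y
    simp [hskew]
  have hZW : ∀ w ∈ W, (s⁻¹ • X) w ∈ W := fun w hw => W.smul_mem _ (hXW w hw)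
  have hj := joined_cayley hnd hZskew hZW hu
  have hm := cayley_mem hnd hZskew hZW hu
  set h := (1 - s⁻¹ • X) * Ring.inverse (1 + s⁻¹ • X) with hh
  have hunit : IsUnit (1 + g * h) := by
    refine isUnit_of_injective ((injective_iff_map_eq_zero (1 + g * h)).mpr fun x hx => ?_)
    have hv := apply_inverse hu x
    set v := Ring.inverse (1 + s⁻¹ • X) x with hvdef
    have hx' : h x = v - s⁻¹ • X v := rfl
    have hx1 : x + g (h x) = 0 := hx
    have hv' : v + s⁻¹ • X v = x := hv
    rw [hx', ← hv', map_sub, map_smul] at hx1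
    have hT1 : T s (π v + s • (v - π v)) = 0 := by
      rw [hT]
      have e1 : π (π v + s • (v - π v)) = π v := by
        rw [map_add, map_smul, map_sub, hππ]; simp
      have e2 : X (π v + s • (v - π v)) = X v := by rw [← hXπ, e1, hXπ]
      have e3 : s • π v + (π v + s • (v - π v) - π v) = s • v := by module
      rw [e2, e1, e3]
      have e4 : X v - g (X v) + (s • v + g (s • v)) =
          s • (v + s⁻¹ • X v + (g v - s⁻¹ • g (X v))) := by
        rw [map_smul]
        simp only [smul_add, smul_sub, smul_smul, mul_inv_cancel₀ hs0, one_smul]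
        abel
      rw [e4, hx1, smul_zero]
    have h0 := (injective_iff_map_eq_zero (T s)).mp (injective_of_isUnit hs) _ hT1
    have hπv : π v = 0 := by
      have := congrArg π h0
      rw [map_add, map_smul, map_sub, hππ] at this
      simpa using this
    rw [hπv, zero_add, sub_zero] at h0
    have hv0 := (smul_eq_zero.mp h0).resolve_left hs0
    rw [← hv', hv0]; simp
  have h1 := joined_of_isUnit hnd (StabSet.mul_mem hg hm) hunit
  have h2 := StabSet.joinedIn_mul_left hg hj
  rw [mul_one] at h2
  exact h1.trans h2.symm

end Key

/-! ### The sign character of the stabilizer of a subspace -/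

section Sign

lemma exists_proj {V : Type*} [AddCommGroup V] [Module ℂ V] (R W : Submodule ℂ V) :
    ∃ M : Submodule ℂ V, M ≤ W ∧ ∃ p : V →ₗ[ℂ] M, (∀ x : M, p x = x) ∧ (∀ x ∈ R, p x = 0) ∧
      (R ≤ W → ∀ w ∈ W, w - p w ∈ R) := by
  obtain ⟨C, hC⟩ := Submodule.exists_isCompl R
  obtain ⟨C', hle, hC'⟩ :=
    (show Disjoint R (C ⊓ W) from hC.disjoint.mono_right inf_le_left).exists_isCompl
  refine ⟨C ⊓ W, inf_le_right, (C ⊓ W).projectionOnto C' hC'.symm,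
    Submodule.projectionOnto_apply_left _, ?_, ?_⟩
  · intro x hx
    exact (Submodule.projectionOnto_apply_eq_zero_iff _).mpr (hle hx)
  · intro hRW w hw
    obtain ⟨r, hr, c, hc, rfl⟩ := Submodule.mem_sup.mp
      (show w ∈ R ⊔ C by rw [hC.sup_eq_top]; trivial)
    have hcW : c ∈ W := by simpa using W.sub_mem hw (hRW hr)
    rw [map_add, (Submodule.projectionOnto_apply_eq_zero_iff hC'.symm).mpr (hle hr), zero_add,
      Submodule.projectionOnto_apply_of_mem_left hC'.symm ⟨hc, hcW⟩]
    simpa using hr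

lemma mem_genEig {V : Type*} [AddCommGroup V] [Module ℂ V] (g : V →ₗ[ℂ] V) (v : V) :
    v ∈ Module.End.maxGenEigenspace g (-1) ↔ ∃ k : ℕ, ((g + 1) ^ k) v = 0 := by
  rw [Module.End.mem_maxGenEigenspace]
  simp

/-- Additivity of the dimension of the generalized `(-1)`-eigenspace in the exact sequence
`0 → R → W → M → 0` of `g`-stable spaces, where `M` is a complement of `R` in `W` and carries the
map `b` induced by `g`. -/
lemma finrank_genEig_quot {V : Type*} [AddCommGroup V] [Module ℂ V] [FiniteDimensional ℂ V]
    {g : V →ₗ[ℂ] V} {R W M : Submodule ℂ V} (hRW : R ≤ W) (hMW : M ≤ W) {p : V →ₗ[ℂ] M}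
    (hp1 : ∀ x : M, p x = x) (hp0 : ∀ x ∈ R, p x = 0) (hpW : ∀ w ∈ W, w - p w ∈ R)
    (hW : ∀ w ∈ W, g w ∈ W) (hR : ∀ w ∈ R, g w ∈ R) {b : M →ₗ[ℂ] M} (hb : ∀ x : M, b x = p (g x)) :
    finrank ℂ (Module.End.maxGenEigenspace b (-1)) +
      finrank ℂ (R ⊓ Module.End.maxGenEigenspace g (-1) : Submodule ℂ V) =
      finrank ℂ (W ⊓ Module.End.maxGenEigenspace g (-1) : Submodule ℂ V) := by
  obtain ⟨k, hk, π, hE, hπE, hπ1, hπ2, hπ3, hπg, hπW⟩ := fitting g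
  set E := Module.End.maxGenEigenspace g (-1) with hEdef
  have hker : ∀ w ∈ W, p w = 0 → w ∈ R := by
    intro w hw h
    have := hpW w hw
    rwa [h, Submodule.coe_zero, sub_zero] at this
  have hbp : ∀ w ∈ W, b (p w) = p (g w) := by
    intro w hw
    rw [hb, ← sub_eq_zero, ← map_sub, ← map_sub, ← neg_sub w, map_neg]
    exact hp0 _ (R.neg_mem (hR _ (hpW w hw)))
  have hW1 : ∀ j : ℕ, ∀ w ∈ W, ((g + 1) ^ j) w ∈ W := by
    intro j
    induction j with
    | zero => intro w hw; exact hw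
    | succ j ih =>
      intro w hw
      rw [pow_succ, lmul_apply]
      exact ih _ (W.add_mem (hW w hw) hw)
  have hpow : ∀ j : ℕ, ∀ w ∈ W, ((b + 1) ^ j) (p w) = p (((g + 1) ^ j) w) := by
    intro j
    induction j with
    | zero => intro w hw; rfl
    | succ j ih =>
      intro w hw
      rw [pow_succ, pow_succ, lmul_apply, lmul_apply, ← ih ((g + 1) w) (W.add_mem (hW w hw) hw),
        LinearMap.add_apply, LinearMap.add_apply, hbp w hw, map_add p]
      rfl
  -- `f` is `g + 1` off the generalized eigenspace and the identity on it, hence injective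
  let f : V →ₗ[ℂ] V := (g + 1) ∘ₗ (LinearMap.id - π) + π
  have hf : ∀ v, f v = g (v - π v) + (v - π v) + π v := fun v => rfl
  have hfinj : Function.Injective f := by
    refine (injective_iff_map_eq_zero f).mpr fun v hv => ?_
    rw [hf] at hv
    have h1 := congrArg π hv
    have hππ : π (π v) = π v := hπ1 _ (hπE v)
    rw [map_add, map_add, hπg, map_sub, hππ, sub_self, map_zero, zero_add, zero_add, map_zero] at h1
    rw [h1, sub_zero, add_zero] at hv
    rw [← hπ1 v ((mem_genEig g v).mpr ⟨1, by rw [pow_one]; exact hv⟩), h1]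
  have hfR : ∀ w ∈ R, f w ∈ R := fun w hw => by
    have hπw := hπW R hR w hw
    exact R.add_mem (R.add_mem (hR _ (R.sub_mem hw hπw)) (R.sub_mem hw hπw)) hπw
  have hdesc : ∀ j : ℕ, ∀ y, π y = 0 → ((g + 1) ^ j) y ∈ R → y ∈ R := by
    intro j
    induction j with
    | zero => intro y _ h; exact h
    | succ j ih =>
      intro y hy h
      rw [pow_succ, lmul_apply] at h
      have hy1 : π ((g + 1) y) = 0 := by
        rw [LinearMap.add_apply, map_add, hπg, hy, map_zero, zero_add]
        exact hy
      have h2 := ih _ hy1 h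
      refine mem_of_apply_mem hfinj hfR ?_
      rw [hf, hy, sub_zero, add_zero]
      exact h2
  let f0 : (W ⊓ E : Submodule ℂ V) →ₗ[ℂ] M := p ∘ₗ (W ⊓ E).subtype
  have hf0 : ∀ x, f0 x = p x := fun x => rfl
  have hrange : f0.range = Module.End.maxGenEigenspace b (-1) := by
    ext x
    rw [mem_genEig]
    constructor
    · rintro ⟨y, rfl⟩
      obtain ⟨j, hj⟩ := (mem_genEig g y).mp y.2.2
      exact ⟨j, by rw [hf0, hpow j _ y.2.1, hj, map_zero]⟩
    · rintro ⟨j, hj⟩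
      have hx : (x : V) ∈ W := hMW x.2
      have h1 : ((g + 1) ^ j) (x : V) ∈ R := by
        refine hker _ (hW1 j _ hx) ?_
        rw [← hpow j _ hx, hp1, hj]
      have hcomm : ∀ i : ℕ, ∀ v, π (((g + 1) ^ i) v) = ((g + 1) ^ i) (π v) := by
        intro i
        induction i with
        | zero => intro v; rfl
        | succ i ih =>
          intro v
          rw [pow_succ, lmul_apply, lmul_apply, ih]
          congr 1
          rw [LinearMap.add_apply, map_add, hπg]; rfl
      have h2 : (x : V) - π x ∈ R := by
        refine hdesc j _ ?_ ?_
        · rw [map_sub, hπ1 _ (hπE x), sub_self]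
        · rw [map_sub, ← hcomm]
          exact R.sub_mem h1 (hπW R hR _ h1)
      refine ⟨⟨π x, hπW W hW x hx, hπE x⟩, ?_⟩
      rw [hf0]
      change p (π x) = x
      have h3 := hp0 _ h2
      rw [map_sub, hp1, sub_eq_zero] at h3
      exact h3.symm
  have hkerf : f0.ker = R.comap (W ⊓ E).subtype := by
    ext x
    exact ⟨fun h => hker x x.2.1 h, fun h => hp0 _ h⟩
  have h := LinearMap.finrank_range_add_finrank_ker f0
  rw [hrange, hkerf, finrank_comap_subtype] at h
  rwa [← inf_assoc, inf_eq_left.mpr hRW] at h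

variable {V : Type*} [NormedAddCommGroup V] [NormedSpace ℂ V] [FiniteDimensional ℂ V]
  {β : V →ₗ[ℂ] V →ₗ[ℂ] ℂ} {W : Submodule ℂ V} {σ : ℂ}

/-- The sign character of `StabSet β W`: the determinant of the isometry induced on
`W ⧸ (W ⊓ bperp β W)`, realized on a complement of `W ⊓ bperp β W` in `W`. -/
lemma exists_sign (hnd : ∀ v, (∀ w, β v w = 0) → v = 0)
    (hσ : ∀ x y, β x y = σ * β y x) :
    ∃ ε : (V →L[ℂ] V) → ℂ, Continuous ε ∧
      (∀ a ∈ StabSet β W, ∀ b ∈ StabSet β W, ε (a * b) = ε a * ε b) ∧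
      (∀ a ∈ StabSet β W, ε a = (-1) ^
        (finrank ℂ (W ⊓ Module.End.maxGenEigenspace (a : V →ₗ[ℂ] V) (-1) : Submodule ℂ V) +
        finrank ℂ ((W ⊓ bperp β W) ⊓
          Module.End.maxGenEigenspace (a : V →ₗ[ℂ] V) (-1) : Submodule ℂ V))) ∧
      (∀ a : V →L[ℂ] V, ∀ f : V →ₗ[ℂ] ℂ, ∀ w ∈ W, (∀ x ∈ W, a x = x + f x • w) →
        (∀ x ∈ W ⊓ bperp β W, f x = 0) → ε a = 1 + f w) := by
  obtain ⟨M, hMW, p, hp1, hp0, hpW⟩ := exists_proj (W ⊓ bperp β W) W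
  replace hpW := hpW inf_le_left
  let pc : V →L[ℂ] M := LinearMap.toContinuousLinearMap p
  let ind : (V →L[ℂ] V) → (M →L[ℂ] M) := fun a => pc ∘L a ∘L M.subtypeL
  have hind : ∀ a (x : M), ind a x = p (a x) := fun a x => rfl
  have hform : ∀ w ∈ W, ∀ w' ∈ W, β (p w) (p w') = β w w' := by
    have h1 : ∀ w ∈ W, ∀ w' ∈ W, β w (p w') = β w w' := by
      intro w hw w' hw'
      rw [eq_comm, ← sub_eq_zero, ← map_sub]
      exact form_zero_comm hσ ((hpW w' hw').2 w hw)
    intro w hw w' hw'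
    rw [h1 _ (hMW (p w).2) _ hw', hσ, h1 _ hw' _ hw, ← hσ]
  have hstabR : ∀ a ∈ StabSet β W, ∀ x ∈ W ⊓ bperp β W, a x ∈ W ⊓ bperp β W := fun a ha x hx =>
    ⟨ha.2.2 x hx.1, stab_perp (g := (a : V →ₗ[ℂ] V)) hnd ha.1 ha.2.2 x hx.2⟩
  refine ⟨fun a => (ind a).det, ?_, ?_, ?_, ?_⟩
  · refine ContinuousLinearMap.continuous_det.comp ?_
    fun_prop
  · intro a ha b hb
    have : ((ind (a * b) : M →L[ℂ] M) : M →ₗ[ℂ] M) =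
        (ind a : M →ₗ[ℂ] M) * (ind b : M →ₗ[ℂ] M) := by
      ext x
      rw [lmul_apply]
      change (p (a (b x)) : V) = p (a (p (b x)))
      rw [← sub_eq_zero, ← Submodule.coe_sub, ← map_sub, ← map_sub,
        hp0 _ (hstabR a ha _ (hpW _ (hb.2.2 _ (hMW x.2)))), Submodule.coe_zero]
    change LinearMap.det ((ind (a * b) : M →L[ℂ] M) : M →ₗ[ℂ] M) = _
    rw [this, map_mul]
  · intro a ha
    let βM : M →ₗ[ℂ] M →ₗ[ℂ] ℂ := β.compl₁₂ M.subtype M.subtype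
    have hβM : ∀ x y : M, βM x y = β x y := fun x y => rfl
    have hndM : ∀ v, (∀ w, βM v w = 0) → v = 0 := by
      intro v h
      have hv : (v : V) ∈ W ⊓ bperp β W := by
        refine ⟨hMW v.2, fun w hw => ?_⟩
        rw [← hform _ (hMW v.2) w hw, hp1]
        exact h (p w)
      rw [← hp1 v]
      exact hp0 _ hv
    have hisoM : ∀ x y, βM ((ind a : M →ₗ[ℂ] M) x) ((ind a : M →ₗ[ℂ] M) y) = βM x y := by
      intro x y
      change β (p (a x)) (p (a y)) = β x y
      rw [hform _ (ha.2.2 _ (hMW x.2)) _ (ha.2.2 _ (hMW y.2)), ha.1]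
    have hdim := finrank_genEig_quot (g := (a : V →ₗ[ℂ] V)) inf_le_left hMW hp1 hp0 hpW ha.2.2
      (hstabR a ha) (b := (ind a : M →ₗ[ℂ] M)) (hind a)
    change LinearMap.det ((ind a : M →L[ℂ] M) : M →ₗ[ℂ] M) = _
    rw [det_isometry hndM hisoM, ← hdim, add_assoc, pow_add]
    rw [← two_mul, pow_mul]
    simp
  · intro a f w hw ha hf
    have h1 : (ind a : M →ₗ[ℂ] M) = LinearMap.transvection (f ∘ₗ M.subtype) (p w) := by
      ext x
      rw [LinearMap.transvection.apply]
      change (p (a x) : V) = _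
      rw [ha x (hMW x.2), map_add, hp1, map_smul]
      rfl
    change LinearMap.det ((ind a : M →L[ℂ] M) : M →ₗ[ℂ] M) = _
    rw [h1, LinearMap.transvection.det]
    congr 1
    change f (p w) = f w
    rw [eq_comm, ← sub_eq_zero, ← map_sub]
    exact hf _ (hpW w hw)

end Sign

/-! ### Components of the stabilizer for a single form -/

section Block

variable {V : Type*} [NormedAddCommGroup V] [NormedSpace ℂ V] [FiniteDimensional ℂ V]
  {β : V →ₗ[ℂ] V →ₗ[ℂ] ℂ} {W : Submodule ℂ V}

lemma StabSet.exists_mul_eq (hnd : ∀ v, (∀ w, β v w = 0) → v = 0) {a b : V →L[ℂ] V}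
    (ha : a ∈ StabSet β W) (hb : b ∈ StabSet β W) : ∃ c ∈ StabSet β W, a * c = b := by
  obtain ⟨a', ha', h⟩ := StabSet.inv_mem hnd ha
  exact ⟨a' * b, StabSet.mul_mem ha' hb, by rw [← mul_assoc, h, one_mul]⟩

/-- The reflection `x ↦ x - 2 β(x, w) / β(w, w) • w` in a non-isotropic vector. -/
lemma exists_reflection (hsym : ∀ x y, β x y = β y x) {w : V} (hw : β w w ≠ 0) :
    ∃ s : V →L[ℂ] V, ∃ f : V →ₗ[ℂ] ℂ, (∀ x y, β (s x) (s y) = β x y) ∧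
      LinearMap.det (s : V →ₗ[ℂ] V) = -1 ∧ (∀ x, s x = x + f x • w) ∧ f w = -2 ∧
      ∀ x, β w x = 0 → f x = 0 := by
  let f : V →ₗ[ℂ] ℂ := (-2 / β w w) • β w
  have hf : ∀ x, f x = -2 / β w w * β w x := fun x => rfl
  have hfw : f w = -2 := by rw [hf, div_mul_cancel₀ _ hw]
  let s : V →L[ℂ] V := LinearMap.toContinuousLinearMap (LinearMap.transvection f w)
  have hs : ∀ x, s x = x + f x • w := fun x => LinearMap.transvection.apply f w x
  refine ⟨s, f, fun x y => ?_, ?_, hs, hfw, fun x hx => by rw [hf, hx, mul_zero]⟩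
  · rw [hs, hs]
    simp only [map_add, map_smul, LinearMap.add_apply, LinearMap.smul_apply, smul_eq_mul]
    rw [hf, hf, hsym x w]
    field_simp
    ring
  · change LinearMap.det (LinearMap.transvection f w) = -1
    rw [LinearMap.transvection.det, hfw]
    norm_num

lemma exists_nonisotropic {V : Type*} [AddCommGroup V] [Module ℂ V] {β : V →ₗ[ℂ] V →ₗ[ℂ] ℂ}
    (hsym : ∀ x y, β x y = β y x) {P : Submodule ℂ V}
    (h : ¬ P ≤ bperp β P) : ∃ w ∈ P, β w w ≠ 0 := by
  by_contra! hcon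
  refine h fun x hx y hy => ?_
  have h1 := hcon (x + y) (P.add_mem hx hy)
  simp only [map_add, LinearMap.add_apply, hcon x hx, hcon y hy, hsym y x] at h1
  linear_combination h1 / 2

/-- Symmetric form with neither `W` nor `bperp β W` totally isotropic: the stabilizer has two path
components, separated by the sign `ε`. The value `-1` is attained by a product of two reflections. -/
lemma block_two (hnd : ∀ v, (∀ w, β v w = 0) → v = 0) (hsym : ∀ x y, β x y = β y x)
    {n k r : ℕ} (hn : n = finrank ℂ V) (hk : k = finrank ℂ W)
    (hr : (finrank ℂ (W ⊓ bperp β W : Submodule ℂ V) : ℤ) = (k : ℤ) - r)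
    (hc : max 0 (2 * (k : ℤ) - (n : ℤ)) < (r : ℤ)) :
    ∃ ε : (V →L[ℂ] V) → ℂ, Continuous ε ∧ (∀ a ∈ StabSet β W, ε a = 1 ∨ ε a = -1) ∧
      (∃ a ∈ StabSet β W, ε a = 1) ∧ (∃ a ∈ StabSet β W, ε a = -1) ∧
      ∀ a ∈ StabSet β W, ∀ b ∈ StabSet β W, ε a = ε b → JoinedIn (StabSet β W) a b := by
  have hσ : ∀ x y, β x y = 1 * β y x := fun x y => by rw [one_mul, hsym]
  obtain ⟨ε, hεc, hεm, hεp, hεt⟩ := exists_sign (W := W) hnd hσ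
  have hpm : ∀ a ∈ StabSet β W, ε a = 1 ∨ ε a = -1 := by
    intro a ha
    rw [hεp a ha]
    exact neg_one_pow_eq_or ℂ _
  have hne : ∀ a ∈ StabSet β W, ε a ≠ 0 := by
    intro a ha
    rcases hpm a ha with h | h <;> rw [h] <;> norm_num
  refine ⟨ε, hεc, hpm, ⟨1, StabSet.one_mem, ?_⟩, ?_, ?_⟩
  · have h1 := StabSet.one_mem (β := β) (W := W)
    have := hεm 1 h1 1 h1
    rw [mul_one] at this
    exact (mul_eq_left₀ (hne 1 h1)).mp this.symm
  · have hdim := finrank_bperp hnd hσ W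
    obtain ⟨hc0, hc1⟩ := max_lt_iff.mp hc
    have hW : ¬ W ≤ bperp β W := by
      intro h
      rw [inf_eq_left.mpr h, ← hk] at hr
      omega
    have hU : ¬ bperp β W ≤ bperp β (bperp β W) := by
      intro h
      rw [bperp_bperp hnd hσ] at h
      rw [inf_eq_right.mpr h] at hr
      omega
    obtain ⟨w, hw, hww⟩ := exists_nonisotropic hsym hW
    obtain ⟨u, hu, huu⟩ := exists_nonisotropic hsym hU
    obtain ⟨s, f, hs1, hs2, hs3, hs4, hs5⟩ := exists_reflection hsym hww
    obtain ⟨s', f', hs1', hs2', hs3', hs4', hs5'⟩ := exists_reflection hsym huu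
    have hst : ∀ x ∈ W, (s * s') x = x + f x • w := by
      intro x hx
      rw [mul_apply_eq_comp, hs3' x, hs5' x (hu x hx), zero_smul, add_zero, hs3]
    refine ⟨s * s', ⟨fun x y => ?_, ?_, fun x hx => ?_⟩, ?_⟩
    · rw [mul_apply_eq_comp, mul_apply_eq_comp, hs1, hs1']
    · have : ((s * s' : V →L[ℂ] V) : V →ₗ[ℂ] V) = (s : V →ₗ[ℂ] V) * (s' : V →ₗ[ℂ] V) := rfl
      rw [this, map_mul, hs2, hs2']
      norm_num
    · rw [hst x hx]
      exact W.add_mem hx (W.smul_mem _ hw)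
    · rw [hεt _ f w hw hst fun x hx => hs5 x (by rw [hsym]; exact hx.2 w hw), hs4]
      norm_num
  · intro a ha b hb hab
    obtain ⟨c, hc, rfl⟩ := StabSet.exists_mul_eq hnd ha hb
    rw [hεm a ha c hc] at hab
    have hc1 : ε c = 1 := (mul_eq_left₀ (hne a ha)).mp hab.symm
    have := StabSet.joinedIn_mul_left ha
      (joined_of_parity hnd (Or.inl rfl) hσ hc fun _ => by
        rw [hεp c hc] at hc1
        by_contra h
        rw [Nat.not_even_iff_odd] at h
        rw [h.neg_one_pow] at hc1
        norm_num at hc1)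
    rwa [mul_one] at this

/-- In the remaining cases the stabilizer is path connected, since the parity hypothesis of
`joined_of_parity` is vacuous or automatic. -/
lemma block_one (hnd : ∀ v, (∀ w, β v w = 0) → v = 0)
    (hrefl : (∀ v w, β v w = β w v) ∨ (∀ v w, β v w = - β w v))
    {n k r : ℕ} (hn : n = finrank ℂ V) (hk : k = finrank ℂ W)
    (hr : (finrank ℂ (W ⊓ bperp β W : Submodule ℂ V) : ℤ) = (k : ℤ) - r)
    (hc : ¬ ((∀ x y, β x y = β y x) ∧ max 0 (2 * (k : ℤ) - (n : ℤ)) < (r : ℤ))) :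
    ∀ a ∈ StabSet β W, ∀ b ∈ StabSet β W, JoinedIn (StabSet β W) a b := by
  intro a ha b hb
  obtain ⟨c, hcm, rfl⟩ := StabSet.exists_mul_eq hnd ha hb
  suffices h : JoinedIn (StabSet β W) 1 c by
    have := StabSet.joinedIn_mul_left ha h
    rwa [mul_one] at this
  rcases hrefl with hsym | hskew
  · have hσ : ∀ x y, β x y = 1 * β y x := fun x y => by rw [one_mul, hsym]
    refine joined_of_parity hnd (Or.inl rfl) hσ hcm fun _ => ?_
    have hdim := finrank_bperp hnd hσ W
    have hc' : ¬ (max 0 (2 * (k : ℤ) - (n : ℤ)) < (r : ℤ)) := fun h => hc ⟨hsym, h⟩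
    rw [max_lt_iff, not_and_or, not_lt, not_lt] at hc'
    rcases hc' with h0 | h1
    · have : W ⊓ bperp β W = W := Submodule.eq_of_le_of_finrank_le inf_le_left (by omega)
      rw [this]
      exact ⟨_, rfl⟩
    · have : W ⊓ bperp β W = bperp β W :=
        Submodule.eq_of_le_of_finrank_le inf_le_right (by omega)
      rw [this, finrank_inf_genEig hnd hσ (g := (c : V →ₗ[ℂ] V)) hcm.1 hcm.2.2]
      exact even_genEig hnd hcm.1 hcm.2.1
  · have hσ : ∀ x y, β x y = (-1) * β y x := fun x y => by rw [hskew]; ring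
    exact joined_of_parity hnd (Or.inr rfl) hσ hcm fun h => by norm_num at h

end Block

/-! ### Block triangular endomorphisms -/

section Triangular

variable {m : ℕ} {Bi : Fin m → Type*}
  [∀ i, NormedAddCommGroup (Bi i)] [∀ i, NormedSpace ℂ (Bi i)]

/-- `Tri g a`: the endomorphism `g` of `B₁ ⊕ ⋯ ⊕ B_m` is block upper triangular with diagonal blocks
`a i`. -/
def Tri (g : (∀ j, Bi j) →L[ℂ] (∀ j, Bi j)) (a : ∀ i, Bi i →L[ℂ] Bi i) : Prop :=
  ∀ i x, (∀ j, i < j → g (Pi.single i x) j = 0) ∧ g (Pi.single i x) i = a i x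

/-- The `i`-th diagonal block of an endomorphism of `B₁ ⊕ ⋯ ⊕ B_m`. -/
def diagBlock (i : Fin m) (g : (∀ j, Bi j) →L[ℂ] (∀ j, Bi j)) : Bi i →L[ℂ] Bi i :=
  ContinuousLinearMap.proj i ∘L g ∘L ContinuousLinearMap.single ℂ Bi i

/-- The block diagonal endomorphism with prescribed blocks. -/
def blockDiag (a : ∀ i, Bi i →L[ℂ] Bi i) : (∀ j, Bi j) →L[ℂ] (∀ j, Bi j) :=
  ContinuousLinearMap.pi fun i => a i ∘L ContinuousLinearMap.proj i

lemma diagBlock_apply (i : Fin m) (g : (∀ j, Bi j) →L[ℂ] (∀ j, Bi j)) (x : Bi i) :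
    diagBlock i g x = g (Pi.single i x) i := rfl

lemma continuous_diagBlock (i : Fin m) :
    Continuous (diagBlock i : ((∀ j, Bi j) →L[ℂ] (∀ j, Bi j)) → (Bi i →L[ℂ] Bi i)) := by
  unfold diagBlock
  fun_prop

lemma continuous_blockDiag :
    Continuous (blockDiag : (∀ i, Bi i →L[ℂ] Bi i) → ((∀ j, Bi j) →L[ℂ] (∀ j, Bi j))) := by
  have h : (blockDiag : (∀ i, Bi i →L[ℂ] Bi i) → ((∀ j, Bi j) →L[ℂ] (∀ j, Bi j))) =
      fun a => ∑ i, ContinuousLinearMap.single ℂ Bi i ∘L a i ∘L ContinuousLinearMap.proj i := by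
    funext a
    ext1 v
    rw [sum_apply]
    exact (Finset.univ_sum_single (fun i => a i (v i))).symm
  rw [h]
  fun_prop

lemma Tri.diagBlock_eq {g : (∀ j, Bi j) →L[ℂ] (∀ j, Bi j)} {a : ∀ i, Bi i →L[ℂ] Bi i}
    (h : Tri g a) (i : Fin m) : diagBlock i g = a i :=
  ContinuousLinearMap.ext fun x => (h i x).2

lemma Tri.apply {g : (∀ j, Bi j) →L[ℂ] (∀ j, Bi j)} {a : ∀ i, Bi i →L[ℂ] Bi i}
    (h : Tri g a) {i : Fin m} {v : ∀ j, Bi j} (hv : ∀ l, i < l → v l = 0) :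
    (∀ j, i < j → g v j = 0) ∧ g v i = a i (v i) := by
  have hsum : ∀ j, g v j = ∑ l, g (Pi.single l (v l)) j := by
    intro j
    conv_lhs => rw [← Finset.univ_sum_single v]
    rw [map_sum, Finset.sum_apply]
  have hz : ∀ l j, l < j ∨ i < l → g (Pi.single l (v l)) j = 0 := by
    rintro l j (h1 | h1)
    · exact (h l _).1 j h1
    · rw [hv l h1, Pi.single_zero, map_zero, Pi.zero_apply]
  constructor
  · intro j hj
    rw [hsum]
    refine Finset.sum_eq_zero fun l _ => hz l j ?_
    rcases lt_or_ge l j with h1 | h1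
    · exact Or.inl h1
    · exact Or.inr (hj.trans_le h1)
  · rw [hsum, Finset.sum_eq_single i, (h i _).2]
    · intro l _ hl
      exact hz l i (lt_or_gt_of_ne hl)
    · simp

lemma Tri.add {g g' : (∀ j, Bi j) →L[ℂ] (∀ j, Bi j)} {a a' : ∀ i, Bi i →L[ℂ] Bi i}
    (h : Tri g a) (h' : Tri g' a') : Tri (g + g') (a + a') := fun i x =>
  ⟨fun j hj => by
    rw [add_apply, Pi.add_apply, (h i x).1 j hj, (h' i x).1 j hj, add_zero], by
    rw [add_apply, Pi.add_apply, (h i x).2, (h' i x).2]; rfl⟩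

lemma Tri.smul {g : (∀ j, Bi j) →L[ℂ] (∀ j, Bi j)} {a : ∀ i, Bi i →L[ℂ] Bi i} (c : ℂ)
    (h : Tri g a) : Tri (c • g) (c • a) := fun i x =>
  ⟨fun j hj => by
    rw [smul_apply, Pi.smul_apply, (h i x).1 j hj, smul_zero], by
    rw [smul_apply, Pi.smul_apply, (h i x).2]; rfl⟩

lemma Tri.mul {g g' : (∀ j, Bi j) →L[ℂ] (∀ j, Bi j)} {a a' : ∀ i, Bi i →L[ℂ] Bi i}
    (h : Tri g a) (h' : Tri g' a') : Tri (g * g') (fun i => a i * a' i) := fun i x => by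
  have := h.apply (v := g' (Pi.single i x)) (i := i) (h' i x).1
  rw [(h' i x).2] at this
  exact this

lemma tri_blockDiag (a : ∀ i, Bi i →L[ℂ] Bi i) : Tri (blockDiag a) a := fun i x => by
  have : ∀ j, blockDiag a (Pi.single i x) j = a j (Pi.single (M := Bi) i x j) := fun j => rfl
  refine ⟨fun j hj => ?_, ?_⟩
  · rw [this, Pi.single_eq_of_ne hj.ne', map_zero]
  · rw [this, Pi.single_eq_same]

/-- A triangular endomorphism with injective diagonal reflects vanishing of all coordinates from
position `n` on. -/
lemma Tri.reflect {g : (∀ j, Bi j) →L[ℂ] (∀ j, Bi j)} {a : ∀ i, Bi i →L[ℂ] Bi i}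
    (h : Tri g a) (ha : ∀ i, Function.Injective (a i)) (n : ℕ) {v : ∀ j, Bi j}
    (hv : ∀ j : Fin m, n ≤ j → g v j = 0) : ∀ j : Fin m, n ≤ j → v j = 0 := by
  by_contra! hcon
  obtain ⟨j₀, hj₀⟩ := hcon
  obtain ⟨j, hj⟩ := (Set.toFinite {j : Fin m | n ≤ j ∧ v j ≠ 0}).exists_maximal ⟨j₀, hj₀⟩
  have hmax : ∀ l, j < l → v l = 0 := by
    intro l hl
    by_contra hvl
    have hle : n ≤ (l : ℕ) := hj.prop.1.trans hl.le
    exact absurd (hj.le_of_ge ⟨hle, hvl⟩ hl.le) (not_le.mpr hl)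
  have h1 := (h.apply hmax).2
  rw [hv j hj.prop.1] at h1
  exact hj.prop.2 ((injective_iff_map_eq_zero (a j)).mp (ha j) _ h1.symm)

lemma Tri.injective {g : (∀ j, Bi j) →L[ℂ] (∀ j, Bi j)} {a : ∀ i, Bi i →L[ℂ] Bi i}
    (h : Tri g a) (ha : ∀ i, Function.Injective (a i)) : Function.Injective g :=
  (injective_iff_map_eq_zero g).mpr fun v hv =>
    funext fun j => h.reflect ha 0 (fun j _ => by rw [hv]; rfl) j (Nat.zero_le _)

lemma Tri.inverse {g : (∀ j, Bi j) →L[ℂ] (∀ j, Bi j)} (h : Tri g 1) (hu : IsUnit g) :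
    Tri (Ring.inverse g) 1 := fun i x => by
  have h1 := apply_inverse hu (Pi.single i x)
  set v := Ring.inverse g (Pi.single i x)
  have h2 : ∀ j, i < j → v j = 0 := fun j hj =>
    h.reflect (fun _ => Function.injective_id) (i + 1)
      (fun l hl => by
        rw [h1]
        exact Pi.single_eq_of_ne (Fin.lt_def.mpr (Nat.lt_of_succ_le hl)).ne' x)
      j (Nat.succ_le_of_lt hj)
  refine ⟨h2, ?_⟩
  have h3 := (h.apply h2).2
  rw [h1, Pi.single_eq_same] at h3
  exact h3.symm

/-- A linear section of the `i`-th coordinate on `B_{≤ i}` which maps `prI Bi i H` into `H`. -/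
lemma exists_section (H : Submodule ℂ (∀ j, Bi j)) (i : Fin m) :
    ∃ s : Bi i →ₗ[ℂ] (∀ j, Bi j), (∀ x j, i < j → s x j = 0) ∧ (∀ x, s x i = x) ∧
      ∀ x ∈ prI Bi i H, s x ∈ H := by
  let q : (H ⊓ Ble Bi i : Submodule ℂ (∀ j, Bi j)) →ₗ[ℂ] prI Bi i H :=
    ((LinearMap.proj i : (∀ j, Bi j) →ₗ[ℂ] Bi i).restrict
      (fun x hx => Submodule.mem_map_of_mem hx))
  have hq : ∀ x, (q x : Bi i) = (x : ∀ j, Bi j) i := fun x => rfl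
  have hqs : Function.Surjective q := by
    rintro ⟨_, x, hx, rfl⟩
    exact ⟨⟨x, hx⟩, rfl⟩
  obtain ⟨t, ht⟩ := LinearMap.exists_rightInverse_of_surjective q (LinearMap.range_eq_top.mpr hqs)
  obtain ⟨c, hc⟩ := LinearMap.exists_leftInverse_of_injective (prI Bi i H).subtype
    (Submodule.ker_subtype _)
  have ht' : ∀ x, ((t x : ∀ j, Bi j)) i = x := fun x => by
    rw [← hq]
    exact congrArg Subtype.val (congrArg (fun f => f x) ht)
  have hc' : ∀ x : prI Bi i H, c x = x := fun x => congrArg (fun f => f x) hc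
  let s : Bi i →ₗ[ℂ] (∀ j, Bi j) := LinearMap.single ℂ Bi i +
    ((H ⊓ Ble Bi i).subtype ∘ₗ t - LinearMap.single ℂ Bi i ∘ₗ (prI Bi i H).subtype) ∘ₗ c
  have hs : ∀ x j, s x j = Pi.single (M := Bi) i x j +
    ((t (c x) : ∀ j, Bi j) j - Pi.single (M := Bi) i (c x : Bi i) j) := fun x j => rfl
  refine ⟨s, ?_, ?_, ?_⟩
  · intro x j hj
    have h0 : (t (c x) : ∀ j, Bi j) j = 0 := (t (c x)).2.2 j hj
    rw [hs, Pi.single_eq_of_ne hj.ne', Pi.single_eq_of_ne hj.ne', h0]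
    simp
  · intro x
    rw [hs, Pi.single_eq_same, Pi.single_eq_same, ht', sub_self, add_zero]
  · intro x hx
    have : s x = (t ⟨x, hx⟩ : ∀ j, Bi j) := by
      funext j
      rw [hs, show c x = ⟨x, hx⟩ from hc' ⟨x, hx⟩]
      simp
    rw [this]
    exact (t ⟨x, hx⟩).2.1

/-- A unitriangular automorphism carrying the graded subspace `∏ i, prI Bi i H` onto `H`. -/
lemma exists_straighten [∀ i, FiniteDimensional ℂ (Bi i)] (H : Submodule ℂ (∀ j, Bi j)) :
    ∃ u : (∀ j, Bi j) →L[ℂ] (∀ j, Bi j), Tri u 1 ∧ IsUnit u ∧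
      ∀ v, u v ∈ H ↔ ∀ i, v i ∈ prI Bi i H := by
  choose s hs1 hs2 hs3 using exists_section H
  let u : (∀ j, Bi j) →L[ℂ] (∀ j, Bi j) := LinearMap.toContinuousLinearMap
    (∑ i, s i ∘ₗ (LinearMap.proj i : (∀ j, Bi j) →ₗ[ℂ] Bi i))
  have hu : ∀ v, u v = ∑ i, s i (v i) := by
    intro v
    change (∑ i, s i ∘ₗ (LinearMap.proj i : (∀ j, Bi j) →ₗ[ℂ] Bi i)) v = _
    rw [LinearMap.sum_apply]
    rfl
  have hus : ∀ i x, u (Pi.single i x) = s i x := by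
    intro i x
    rw [hu, Finset.sum_eq_single i, Pi.single_eq_same]
    · intro j _ hj
      rw [Pi.single_eq_of_ne hj, map_zero]
    · simp
  have hT : Tri u 1 := fun i x => by
    rw [hus]
    exact ⟨hs1 i x, hs2 i x⟩
  refine ⟨u, hT, isUnit_of_injective (hT.injective fun _ => Function.injective_id), fun v => ?_⟩
  constructor
  · suffices h : ∀ n : ℕ, ∀ v, (∀ l : Fin m, n ≤ l → v l = 0) → u v ∈ H →
        ∀ i, v i ∈ prI Bi i H from h m v fun l hl => absurd l.2 (not_lt.mpr hl)
    intro n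
    induction n with
    | zero =>
      intro v hv _ i
      rw [hv i (Nat.zero_le _)]
      exact Submodule.zero_mem _
    | succ n ih =>
      intro v hv huv
      by_cases hn : n < m
      · let i : Fin m := ⟨n, hn⟩
        have hvi : ∀ l, i < l → v l = 0 := fun l hl => hv l hl
        have h1 := hT.apply hvi
        have hmem : v i ∈ prI Bi i H := ⟨u v, ⟨huv, fun j hj => h1.1 j hj⟩, h1.2⟩
        have h2 := ih (v - Pi.single i (v i)) (fun l hl => by
            rcases Nat.eq_or_lt_of_le hl with h | h
            · obtain rfl : i = l := Fin.ext h
              simp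
            · have hil : i < l := h
              rw [Pi.sub_apply, hvi l hil, Pi.single_eq_of_ne hil.ne', sub_zero])
          (by
            rw [map_sub, hus]
            exact H.sub_mem huv (hs3 i _ hmem))
        intro j
        by_cases hj : j = i
        · rw [hj]; exact hmem
        · have := h2 j
          rwa [Pi.sub_apply, Pi.single_eq_of_ne hj, sub_zero] at this
      · exact ih v (fun l hl => absurd (hl.trans_lt l.2) hn) huv
  · intro h
    rw [hu]
    exact H.sum_mem fun i _ => hs3 i _ (h i)

end Triangular

/-! ### Components of the stabilizer in `Q_B` -/

section Global

variable {m : ℕ} {Bi : Fin m → Type*}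
  [∀ i, NormedAddCommGroup (Bi i)] [∀ i, NormedSpace ℂ (Bi i)]

/-- The stabilizer of `H` in `Q_B`, described by block triangularity: the diagonal blocks are
isometries of determinant one stabilizing the subspaces `prI Bi i H`. -/
def triStab (βi : ∀ i, Bi i →ₗ[ℂ] Bi i →ₗ[ℂ] ℂ) (H : Submodule ℂ (∀ j, Bi j)) :
    Set ((∀ j, Bi j) →L[ℂ] (∀ j, Bi j)) :=
  {g | Tri g (fun i => diagBlock i g) ∧ (∀ i, diagBlock i g ∈ StabSet (βi i) (prI Bi i H)) ∧
    ∀ v ∈ H, g v ∈ H}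

lemma mem_triStab_of_tri {βi : ∀ i, Bi i →ₗ[ℂ] Bi i →ₗ[ℂ] ℂ} {H : Submodule ℂ (∀ j, Bi j)}
    {g : (∀ j, Bi j) →L[ℂ] (∀ j, Bi j)} {a : ∀ i, Bi i →L[ℂ] Bi i} (h : Tri g a)
    (ha : ∀ i, a i ∈ StabSet (βi i) (prI Bi i H)) (hH : ∀ v ∈ H, g v ∈ H) :
    g ∈ triStab βi H := by
  have : (fun i => diagBlock i g) = a := funext h.diagBlock_eq
  refine ⟨this ▸ h, fun i => ?_, hH⟩
  rw [h.diagBlock_eq]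
  exact ha i

lemma mem_triStab_iff [∀ i, FiniteDimensional ℂ (Bi i)] {βi : ∀ i, Bi i →ₗ[ℂ] Bi i →ₗ[ℂ] ℂ}
    (hnd : ∀ i, ∀ v, (∀ w, βi i v w = 0) → v = 0) {H : Submodule ℂ (∀ j, Bi j)}
    (g : (∀ j, Bi j) →L[ℂ] (∀ j, Bi j)) :
    (memQB Bi βi (g : (∀ j, Bi j) →ₗ[ℂ] (∀ j, Bi j)) ∧
      Submodule.map (g : (∀ j, Bi j) →ₗ[ℂ] (∀ j, Bi j)) H = H) ↔ g ∈ triStab βi H := by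
  constructor
  · rintro ⟨⟨-, hg⟩, hH⟩
    have hH' : ∀ v ∈ H, g v ∈ H := fun v hv => by
      rw [← hH]
      exact Submodule.mem_map_of_mem hv
    choose gi h1 h2 h3 using hg
    have hT : Tri g (fun i => LinearMap.toContinuousLinearMap (gi i : Bi i →ₗ[ℂ] Bi i)) := by
      intro i x
      have h4 := h3 i (Pi.single i x) (fun j hj => Pi.single_eq_of_ne hj x)
      rw [Pi.single_eq_same] at h4
      refine ⟨fun j hj => ?_, ?_⟩
      · have h5 : (g (Pi.single i x) - Pi.single i (gi i x) : ∀ j, Bi j) j = 0 := h4 j hj.le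
        rwa [Pi.sub_apply, Pi.single_eq_of_ne hj.ne', sub_zero] at h5
      · have h5 : (g (Pi.single i x) - Pi.single i (gi i x) : ∀ j, Bi j) i = 0 := h4 i (Set.mem_Ici.mpr le_rfl)
        rwa [Pi.sub_apply, Pi.single_eq_same, sub_eq_zero] at h5
    refine mem_triStab_of_tri hT (fun i => ⟨h1 i, h2 i, ?_⟩) hH'
    rintro _ ⟨v, ⟨hv, hvi⟩, rfl⟩
    have h6 := hT.apply (i := i) (v := v) (fun l hl => hvi l hl)
    exact ⟨g v, ⟨hH' v hv, fun j hj => h6.1 j hj⟩, h6.2⟩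
  · rintro ⟨hT, hs, hH⟩
    have hinj : ∀ i, Function.Injective (diagBlock i g) := fun i =>
      isometry_injective (a := (diagBlock i g : Bi i →ₗ[ℂ] Bi i)) (hnd i) (hs i).1
    have hginj : Function.Injective (g : (∀ j, Bi j) →ₗ[ℂ] (∀ j, Bi j)) := hT.injective hinj
    refine ⟨⟨⟨hginj, LinearMap.injective_iff_surjective.mp hginj⟩, fun i => ?_⟩, ?_⟩
    · refine ⟨LinearEquiv.ofInjectiveEndo (diagBlock i g : Bi i →ₗ[ℂ] Bi i) (hinj i),
        (hs i).1, (hs i).2.1, fun v hv j hj => ?_⟩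
      have hv' : v = Pi.single i (v i) := by
        funext j
        by_cases h : j = i
        · subst h; rw [Pi.single_eq_same]
        · rw [hv j h, Pi.single_eq_of_ne h]
      change g v j - Pi.single (M := Bi) i (diagBlock i g (v i)) j = 0
      rcases eq_or_lt_of_le (show i ≤ j from hj) with rfl | h
      · rw [Pi.single_eq_same, diagBlock_apply, ← hv', sub_self]
      · rw [hv', (hT i _).1 j h, Pi.single_eq_of_ne h.ne', sub_zero]
    · refine Submodule.eq_of_le_of_finrank_eq ?_ (Submodule.equivMapOfInjective _ hginj H).finrank_eq.symm
      rintro _ ⟨v, hv, rfl⟩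
      exact hH v hv

/-- A continuous right inverse of the map taking an element of the stabilizer to its diagonal
blocks: `a ↦ u ∘ blockDiag a ∘ u⁻¹` with `u` as in `exists_straighten`. -/
lemma exists_lift [∀ i, FiniteDimensional ℂ (Bi i)] (H : Submodule ℂ (∀ j, Bi j)) :
    ∃ D : (∀ i, Bi i →L[ℂ] Bi i) → ((∀ j, Bi j) →L[ℂ] (∀ j, Bi j)), Continuous D ∧
      (∀ a, Tri (D a) a) ∧
      ∀ a, (∀ i, ∀ w ∈ prI Bi i H, a i w ∈ prI Bi i H) → ∀ v ∈ H, D a v ∈ H := by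
  obtain ⟨u, hT, hu, hH⟩ := exists_straighten H
  refine ⟨fun a => u * (blockDiag a * Ring.inverse u), ?_, fun a => ?_, fun a ha v hv => ?_⟩
  · exact continuous_const.mul (continuous_blockDiag.mul continuous_const)
  · have := hT.mul ((tri_blockDiag a).mul (hT.inverse hu))
    simpa using this
  · rw [mul_apply_eq_comp, mul_apply_eq_comp, hH]
    rw [← apply_inverse hu v, hH] at hv
    exact fun i => ha i _ (hv i)

/-- Paths between the diagonal blocks lift to the stabilizer; the remaining unipotent parts form a
vector space and are interpolated linearly. -/
lemma joinedIn_triStab [∀ i, FiniteDimensional ℂ (Bi i)] {βi : ∀ i, Bi i →ₗ[ℂ] Bi i →ₗ[ℂ] ℂ}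
    {H : Submodule ℂ (∀ j, Bi j)} {g h : (∀ j, Bi j) →L[ℂ] (∀ j, Bi j)}
    (hg : g ∈ triStab βi H) (hh : h ∈ triStab βi H)
    (hj : ∀ i, JoinedIn (StabSet (βi i) (prI Bi i H)) (diagBlock i g) (diagBlock i h)) :
    JoinedIn (triStab βi H) g h := by
  obtain ⟨D, hDc, hDT, hDH⟩ := exists_lift H
  choose γ hγ using hj
  set a := fun i => diagBlock i g with ha
  set b := fun i => diagBlock i h with hb
  have hN : Tri (g + (-1 : ℂ) • D a) 0 := by
    have := hg.1.add ((hDT a).smul (-1))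
    rwa [← ha, neg_one_smul ℂ a, add_neg_cancel] at this
  have hN' : Tri (h + (-1 : ℂ) • D b) 0 := by
    have := hh.1.add ((hDT b).smul (-1))
    rwa [← hb, neg_one_smul ℂ b, add_neg_cancel] at this
  have hNH : ∀ v ∈ H, (g + (-1 : ℂ) • D a) v ∈ H := fun v hv =>
    H.add_mem (hg.2.2 v hv) (H.smul_mem _ (hDH a (fun i => (hg.2.1 i).2.2) v hv))
  have hNH' : ∀ v ∈ H, (h + (-1 : ℂ) • D b) v ∈ H := fun v hv =>
    H.add_mem (hh.2.2 v hv) (H.smul_mem _ (hDH b (fun i => (hh.2.1 i).2.2) v hv))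
  refine ⟨{
    toFun := fun t => D (fun i => γ i t) + ((1 - (t : ℝ) : ℂ) • (g + (-1 : ℂ) • D a) +
      ((t : ℝ) : ℂ) • (h + (-1 : ℂ) • D b))
    continuous_toFun := ?_
    source' := ?_
    target' := ?_ }, fun t => ?_⟩
  · have h1 : Continuous fun t : unitInterval => fun i => γ i t :=
      continuous_pi fun i => (γ i).continuous
    have h2 := hDc.comp h1
    have h3 : Continuous fun t : unitInterval => ((t : ℝ) : ℂ) := by fun_prop
    exact h2.add (((continuous_const.sub h3).smul continuous_const).add (h3.smul continuous_const))
  · simp only [Path.source, Set.Icc.coe_zero, Complex.ofReal_zero, sub_zero, one_smul, zero_smul,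
      add_zero]
    rw [← ha]
    module
  · simp only [Path.target, Set.Icc.coe_one, Complex.ofReal_one, sub_self, one_smul, zero_smul,
      zero_add]
    rw [← hb]
    module
  · refine mem_triStab_of_tri (a := fun i => γ i t) ?_ (fun i => hγ i t) fun v hv => ?_
    · have := (hDT (fun i => γ i t)).add ((hN.smul (1 - (t : ℝ) : ℂ)).add
        (hN'.smul ((t : ℝ) : ℂ)))
      simpa using this
    · exact H.add_mem (hDH _ (fun i => (hγ i t).2.2) v hv)
        (H.add_mem (H.smul_mem _ (hNH v hv)) (H.smul_mem _ (hNH' v hv)))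

end Global

lemma card_components {X Y : Type*} [TopologicalSpace X] [TopologicalSpace Y]
    [TotallyDisconnectedSpace Y] {f : X → Y} (hf : Continuous f) (hs : Function.Surjective f)
    (hj : ∀ x y, f x = f y → Joined x y) : Nat.card (ConnectedComponents X) = Nat.card Y := by
  refine Nat.card_eq_of_bijective hf.connectedComponentsLift ⟨?_, ?_⟩
  · intro x y
    obtain ⟨x, rfl⟩ := ConnectedComponents.surjective_coe x
    obtain ⟨y, rfl⟩ := ConnectedComponents.surjective_coe y
    intro h
    rw [hf.connectedComponentsLift_apply_coe, hf.connectedComponentsLift_apply_coe] at h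
    rw [ConnectedComponents.coe_eq_coe']
    exact pathComponent_subset_component y (hj x y h).symm
  · intro y
    obtain ⟨x, rfl⟩ := hs y
    exact ⟨x, hf.connectedComponentsLift_apply_coe x⟩

/-- Proposition 5.1(3) (`prop:filt-orbits`): the stabilizer in `Q_B` of a subspace
`H ⊆ B = B₁ ⊕ ⋯ ⊕ B_m` has exactly `2^d` connected components, where `d` is the number of
indices `i` such that `⟨-,-⟩_{B_i}` is symmetric and `max {0, 2k_i - n_i} < r_i`.  (The
canonical topology of the finite-dimensional endomorphism space of `B` is realized via
arbitrary norms on the `B_i`.) -/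
theorem stmt_12 {m : ℕ} (Bi : Fin m → Type*)
    [∀ i, NormedAddCommGroup (Bi i)] [∀ i, NormedSpace ℂ (Bi i)]
    [∀ i, FiniteDimensional ℂ (Bi i)] [∀ i, Nontrivial (Bi i)]
    (βi : ∀ i, Bi i →ₗ[ℂ] Bi i →ₗ[ℂ] ℂ)
    (hnd : ∀ i, ∀ v, (∀ w, βi i v w = 0) → v = 0)
    (hrefl : ∀ i, (∀ v w, βi i v w = βi i w v) ∨ (∀ v w, βi i v w = - βi i w v))
    (H : Submodule ℂ (∀ j, Bi j))
    (n k r : Fin m → ℕ)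
    (hn : ∀ i, n i = finrank ℂ (Bi i))
    (hk : ∀ i, k i = finrank ℂ ↥(prI Bi i H))
    (hr : ∀ i, (finrank ℂ ↥(prI Bi i H ⊓ bperp (βi i) (prI Bi i H)) : ℤ) =
      (k i : ℤ) - r i)
    (d : ℕ)
    (hd : d = Set.ncard {i : Fin m | (∀ x y, βi i x y = βi i y x) ∧
      max 0 (2 * (k i : ℤ) - (n i : ℤ)) < (r i : ℤ)}) :
    Nat.card (ConnectedComponents
      {g : (∀ j, Bi j) →L[ℂ] (∀ j, Bi j) //
        memQB Bi βi (g : (∀ j, Bi j) →ₗ[ℂ] (∀ j, Bi j)) ∧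
        Submodule.map (g : (∀ j, Bi j) →ₗ[ℂ] (∀ j, Bi j)) H = H}) = 2 ^ d := by
  classical
  set cond : Set (Fin m) := {i : Fin m | (∀ x y, βi i x y = βi i y x) ∧
      max 0 (2 * (k i : ℤ) - (n i : ℤ)) < (r i : ℤ)} with hcond
  have htwo := fun i : cond => block_two (hnd i) i.2.1 (hn i) (hk i) (hr i) i.2.2
  choose ε hεc hε1 hεp hεn hεj using htwo
  have hone := fun i (hi : i ∉ cond) => block_one (hnd i) (hrefl i) (hn i) (hk i) (hr i) hi
  have hS := mem_triStab_iff (H := H) hnd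
  let Y := cond → ({1, -1} : Set ℂ)
  let f : {g : (∀ j, Bi j) →L[ℂ] (∀ j, Bi j) //
      memQB Bi βi (g : (∀ j, Bi j) →ₗ[ℂ] (∀ j, Bi j)) ∧
      Submodule.map (g : (∀ j, Bi j) →ₗ[ℂ] (∀ j, Bi j)) H = H} → Y :=
    fun g i => ⟨ε i (diagBlock i.1 g.1), hε1 i _ (((hS g.1).mp g.2).2.1 i)⟩
  have hf : Continuous f := continuous_pi fun i =>
    ((hεc i).comp ((continuous_diagBlock i.1).comp continuous_subtype_val)).subtype_mk _
  have hsurj : Function.Surjective f := by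
    intro y
    obtain ⟨D, -, hDT, hDH⟩ := exists_lift H
    have hex : ∀ i, ∃ a ∈ StabSet (βi i) (prI Bi i H), ∀ hi : i ∈ cond, ε ⟨i, hi⟩ a = y ⟨i, hi⟩ := by
      intro i
      by_cases hi : i ∈ cond
      · rcases (y ⟨i, hi⟩).2 with h | h
        · obtain ⟨a, ha, hae⟩ := hεp ⟨i, hi⟩
          exact ⟨a, ha, fun _ => hae.trans h.symm⟩
        · obtain ⟨a, ha, hae⟩ := hεn ⟨i, hi⟩
          exact ⟨a, ha, fun _ => hae.trans h.symm⟩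
      · exact ⟨1, StabSet.one_mem, fun h => absurd h hi⟩
    choose a ha hae using hex
    refine ⟨⟨D a, (hS _).mpr (mem_triStab_of_tri (hDT a) ha (hDH a fun i => (ha i).2.2))⟩, ?_⟩
    funext i
    refine Subtype.ext ?_
    change ε i (diagBlock i.1 (D a)) = y i
    rw [(hDT a).diagBlock_eq]
    exact hae i i.2
  have hjoin : ∀ x y, f x = f y → Joined x y := by
    intro x y hxy
    have hx := (hS x.1).mp x.2
    have hy := (hS y.1).mp y.2
    have hJ : JoinedIn (triStab βi H) x.1 y.1 := by
      refine joinedIn_triStab hx hy fun i => ?_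
      by_cases hi : i ∈ cond
      · exact hεj ⟨i, hi⟩ _ (hx.2.1 i) _ (hy.2.1 i) (congrArg Subtype.val (congrFun hxy ⟨i, hi⟩))
      · exact hone i hi _ (hx.2.1 i) _ (hy.2.1 i)
    exact (hJ.mono fun g hg => (hS g).mpr hg).joined_subtype
  rw [card_components hf hsurj hjoin, Nat.card_fun, hd, ← Nat.card_coe_set_eq]
  congr 1
  rw [Nat.card_coe_set_eq, Set.ncard_pair (by norm_num)]
end

section
/- Let H ⊆ B be a subspace, and for each i set k_i = dim(pr_i H) and assume dim(pr_i H ∩ (pr_i H)^{⊥_i}) = k_i − r_i for given integers r_i. Then there exists exactly one tuple of subspaces (P̃_i ⊆ B_i, P_i ⊆ B_{≤i}, H_i ⊆ B_{≤i})_{1 ≤ i ≤ m} satisfying, for all i: dim P̃_i = k_i − r_i; dim P_i = k₁ + ⋯ + k_{i−1} + k_i − r_i; dim H_i = k₁ + ⋯ + k_i; P̃_i ⊆ P̃_i^{⊥_i}; pr_i P_i ⊆ P̃_i; pr_i H_i ⊆ P̃_i^{⊥_i}; H_{i−1} ⊆ P_i ⊆ H_i (with H₀ = 0); and H_m = H.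 Namely, necessarily H_i = H ∩ B_{≤i}, P̃_i = pr_i H ∩ (pr_i H)^{⊥_i}, and P_i is the preimage of P̃_i under the projection H ∩ B_{≤i} → pr_i H. -/
/-!
The subspaces `D_n = {v | v_j = 0 for j ≥ n}` interpolate between `B_{<i}` and `B_{≤i}`, and
rank-nullity for the `i`-th coordinate on `H ∩ B_{≤i}` gives, by induction,
`dim (H ∩ B_{≤i}) = k₁ + ⋯ + k_i` (`finrank_inf_Dn`).

If a tuple satisfies the conditions, the `H_i` form a chain ending at `H`, so
`H_i ⊆ H ∩ B_{≤i}`, and the dimensions force equality. The part of `P_i` killed by the `i`-th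
coordinate lies in `H ∩ B_{<i}`, so `dim pr_i P_i ≥ k_i - r_i = dim P̃_i`; hence
`pr_i P_i = P̃_i ⊆ pr_i H`. Since `pr_i H ⊆ P̃_i^⊥` and orthogonality is a symmetric relation,
`P̃_i` lies in the radical of `pr_i H`, which has the same dimension. Finally `P_i` lies in the
preimage of `P̃_i`, and again has the same dimension. The converse is a direct verification with
the same dimension formulas.
-/

open Module

/-- The vectors whose coordinates of index at least `n` vanish; this is `B_{≤i}` for `n = i + 1`
and `B_{<i}` for `n = i`. -/
def Dn {m : ℕ} (Bi : Fin m → Type*) [∀ i, AddCommGroup (Bi i)] [∀ i, Module ℂ (Bi i)]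
    (n : ℕ) : Submodule ℂ (∀ j, Bi j) :=
  Submodule.pi {j : Fin m | n ≤ (j : ℕ)} (fun j => (⊥ : Submodule ℂ (Bi j)))

lemma mem_Dn {m : ℕ} {Bi : Fin m → Type*} [∀ i, AddCommGroup (Bi i)] [∀ i, Module ℂ (Bi i)]
    {n : ℕ} {v : ∀ j, Bi j} : v ∈ Dn Bi n ↔ ∀ j : Fin m, n ≤ (j : ℕ) → v j = 0 := by
  simp [Dn, Submodule.mem_pi]

lemma Ble_eq_Dn {m : ℕ} (Bi : Fin m → Type*) [∀ i, AddCommGroup (Bi i)]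
    [∀ i, Module ℂ (Bi i)] (i : Fin m) : Ble Bi i = Dn Bi (i + 1) := by
  ext v
  simp only [mem_Dn, Ble, Submodule.mem_pi, Set.mem_Ioi, Submodule.mem_bot, Nat.succ_le_iff,
    Fin.val_fin_lt]

lemma Dn_succ_inf_ker {m : ℕ} (Bi : Fin m → Type*) [∀ i, AddCommGroup (Bi i)]
    [∀ i, Module ℂ (Bi i)] (i : Fin m) :
    Dn Bi (i + 1) ⊓ LinearMap.ker (LinearMap.proj i : (∀ j, Bi j) →ₗ[ℂ] Bi i) = Dn Bi i := by
  ext v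
  simp only [Submodule.mem_inf, mem_Dn, LinearMap.mem_ker, LinearMap.proj_apply]
  constructor
  · rintro ⟨h, h0⟩ j hj
    rcases hj.eq_or_lt with e | l
    · obtain rfl : i = j := Fin.ext e
      exact h0
    · exact h j l
  · intro h
    exact ⟨fun j hj => h j (by omega), h i le_rfl⟩

/-- Rank-nullity for the restriction of `f` to a subspace `K`. -/
lemma finrank_eq_map_add_inf_ker {V W : Type*} [AddCommGroup V] [Module ℂ V]
    [FiniteDimensional ℂ V] [AddCommGroup W] [Module ℂ W] (f : V →ₗ[ℂ] W)
    (K : Submodule ℂ V) :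
    finrank ℂ K = finrank ℂ (K.map f) + finrank ℂ ↥(K ⊓ LinearMap.ker f) := by
  have h := LinearMap.finrank_range_add_finrank_ker (f.domRestrict K)
  rw [LinearMap.range_domRestrict, LinearMap.ker_domRestrict] at h
  have e : finrank ℂ ↥((LinearMap.ker f).comap K.subtype) =
      finrank ℂ ↥(K ⊓ LinearMap.ker f) := by
    rw [← Submodule.map_comap_subtype]
    exact (Submodule.finrank_map_subtype_eq K _).symm
  rw [← e]
  exact h.symm

/-- The dimension of the preimage in `K` of a subspace `S` of `f(K)`. -/
lemma finrank_inf_comap {V W : Type*} [AddCommGroup V] [Module ℂ V]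
    [FiniteDimensional ℂ V] [AddCommGroup W] [Module ℂ W] (f : V →ₗ[ℂ] W)
    (K : Submodule ℂ V) (S : Submodule ℂ W) (hS : S ≤ K.map f) :
    finrank ℂ ↥(K ⊓ S.comap f) = finrank ℂ S + finrank ℂ ↥(K ⊓ LinearMap.ker f) := by
  have hmap : (K ⊓ S.comap f).map f = S := by
    refine le_antisymm (Submodule.map_le_iff_le_comap.2 inf_le_right) fun s hs => ?_
    obtain ⟨v, hv, rfl⟩ := hS hs
    exact ⟨v, ⟨hv, hs⟩, rfl⟩
  rw [finrank_eq_map_add_inf_ker f, hmap, inf_assoc, inf_eq_right.2 (LinearMap.ker_le_comap f)]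

lemma finrank_inf_Dn {m : ℕ} (Bi : Fin m → Type*) [∀ i, AddCommGroup (Bi i)]
    [∀ i, Module ℂ (Bi i)] [∀ i, FiniteDimensional ℂ (Bi i)]
    (H : Submodule ℂ (∀ j, Bi j)) (n : ℕ) (hn : n ≤ m) :
    finrank ℂ ↥(H ⊓ Dn Bi n) =
      ∑ j ∈ Finset.univ.filter (fun j : Fin m => (j : ℕ) < n), finrank ℂ ↥(prI Bi j H) := by
  induction n with
  | zero =>
    have : Dn Bi 0 = ⊥ := by
      ext v
      simp [mem_Dn, funext_iff]
    simp [this]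
  | succ n ih =>
    let i : Fin m := ⟨n, hn⟩
    have hs : (Finset.univ.filter fun j : Fin m => (j : ℕ) < n + 1) =
        insert i (Finset.univ.filter fun j : Fin m => (j : ℕ) < n) := by
      ext j
      simp [i, Fin.ext_iff]
      omega
    rw [hs, Finset.sum_insert (by simp [i]), ← ih (by omega),
      finrank_eq_map_add_inf_ker (LinearMap.proj i : (∀ j, Bi j) →ₗ[ℂ] Bi i), inf_assoc,
      show n + 1 = (i : ℕ) + 1 from rfl, Dn_succ_inf_ker, ← Ble_eq_Dn]
    rfl

/-- Orthogonality for a symmetric or skew-symmetric form is a symmetric relation. -/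
lemma le_bperp_comm {V : Type*} [AddCommGroup V] [Module ℂ V]
    {B : V →ₗ[ℂ] V →ₗ[ℂ] ℂ} (hB : (∀ v w, B v w = B w v) ∨ (∀ v w, B v w = - B w v))
    {S T : Submodule ℂ V} (h : S ≤ bperp B T) : T ≤ bperp B S := by
  intro t ht s hs
  have := h hs t ht
  rcases hB with hB | hB <;> rw [hB, this]
  simp

/-- Proposition 6.2 and Remark 6.3 (`prop:xkr-image`, `rmk:xkr-inverse`): over a point
`H ∈ 𝒪_{k,r}`, the fiber data `(P̃_i, P_i, H_i)` of the resolution `X(k,r)` is unique;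
namely, a tuple satisfies the defining conditions of `X(k,r)` together with `H_m = H` if and
only if `H_i = H ∩ B_{≤i}`, `P̃_i = pr_i H ∩ (pr_i H)^⊥` (the radical of `pr_i H`), and
`P_i` is the preimage of `P̃_i` under the projection `H ∩ B_{≤i} → pr_i H`. -/
theorem stmt_13 {m : ℕ} (hm : 0 < m) (Bi : Fin m → Type*)
    [∀ i, AddCommGroup (Bi i)] [∀ i, Module ℂ (Bi i)]
    [∀ i, FiniteDimensional ℂ (Bi i)] [∀ i, Nontrivial (Bi i)]
    (βi : ∀ i, Bi i →ₗ[ℂ] Bi i →ₗ[ℂ] ℂ)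
    (hnd : ∀ i, ∀ v, (∀ w, βi i v w = 0) → v = 0)
    (hrefl : ∀ i, (∀ v w, βi i v w = βi i w v) ∨ (∀ v w, βi i v w = - βi i w v))
    (H : Submodule ℂ (∀ j, Bi j))
    (k : Fin m → ℕ) (hk : ∀ i, k i = finrank ℂ ↥(prI Bi i H))
    (r : Fin m → ℤ)
    (hr : ∀ i, (finrank ℂ ↥(prI Bi i H ⊓ bperp (βi i) (prI Bi i H)) : ℤ) =
      (k i : ℤ) - r i)
    (Pt : ∀ i, Submodule ℂ (Bi i)) (P Hs : ∀ i, Submodule ℂ (∀ j, Bi j)) :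
    ((∀ i,
        (finrank ℂ ↥(Pt i) : ℤ) = (k i : ℤ) - r i ∧
        P i ≤ Ble Bi i ∧
        Hs i ≤ Ble Bi i ∧
        (finrank ℂ ↥(P i) : ℤ) = (∑ j ∈ Finset.Iic i, (k j : ℤ)) - r i ∧
        (finrank ℂ ↥(Hs i) : ℤ) = ∑ j ∈ Finset.Iic i, (k j : ℤ) ∧
        Pt i ≤ bperp (βi i) (Pt i) ∧
        Submodule.map (LinearMap.proj i : (∀ j, Bi j) →ₗ[ℂ] Bi i) (P i) ≤ Pt i ∧
        Submodule.map (LinearMap.proj i : (∀ j, Bi j) →ₗ[ℂ] Bi i) (Hs i) ≤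
          bperp (βi i) (Pt i) ∧
        P i ≤ Hs i) ∧
      (∀ i j : Fin m, (j : ℕ) + 1 = (i : ℕ) → Hs j ≤ P i) ∧
      Hs ⟨m - 1, by omega⟩ = H) ↔
    (∀ i,
      Hs i = H ⊓ Ble Bi i ∧
      Pt i = prI Bi i H ⊓ bperp (βi i) (prI Bi i H) ∧
      P i = (H ⊓ Ble Bi i) ⊓
        Submodule.comap (LinearMap.proj i : (∀ j, Bi j) →ₗ[ℂ] Bi i)
          (prI Bi i H ⊓ bperp (βi i) (prI Bi i H))) := by
  classical
  -- `dim (H ∩ B_{<i})` in terms of the sum in the statement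
  have hN : ∀ i : Fin m, (finrank ℂ ↥(H ⊓ Dn Bi i) : ℤ) = (∑ j ∈ Finset.Iic i, (k j : ℤ)) - k i := by
    intro i
    have hs : Finset.Iic i = insert i (Finset.univ.filter fun j : Fin m => (j : ℕ) < i) := by
      ext j
      simp only [Finset.mem_Iic, Finset.mem_insert, Finset.mem_filter, Finset.mem_univ, true_and,
        Fin.le_def, Fin.ext_iff]
      omega
    rw [hs, Finset.sum_insert (by simp), finrank_inf_Dn Bi H i i.2.le]
    simp [hk]
  have hker : ∀ i, (H ⊓ Ble Bi i) ⊓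
      LinearMap.ker (LinearMap.proj i : (∀ j, Bi j) →ₗ[ℂ] Bi i) = H ⊓ Dn Bi i := by
    intro i
    rw [inf_assoc, Ble_eq_Dn, Dn_succ_inf_ker]
  have hK : ∀ i, (finrank ℂ ↥(H ⊓ Ble Bi i) : ℤ) = ∑ j ∈ Finset.Iic i, (k j : ℤ) := by
    intro i
    have h := finrank_eq_map_add_inf_ker
      (LinearMap.proj i : (∀ j, Bi j) →ₗ[ℂ] Bi i) (H ⊓ Ble Bi i)
    rw [hker] at h
    have h1 := hN i
    have h2 := hk i
    unfold prI at h2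
    omega
  have hPdim : ∀ i, (finrank ℂ ↥((H ⊓ Ble Bi i) ⊓
      Submodule.comap (LinearMap.proj i : (∀ j, Bi j) →ₗ[ℂ] Bi i)
        (prI Bi i H ⊓ bperp (βi i) (prI Bi i H))) : ℤ) =
      (∑ j ∈ Finset.Iic i, (k j : ℤ)) - r i := by
    intro i
    rw [finrank_inf_comap (LinearMap.proj i : (∀ j, Bi j) →ₗ[ℂ] Bi i) (H ⊓ Ble Bi i)
      (prI Bi i H ⊓ bperp (βi i) (prI Bi i H)) inf_le_left, hker]
    push_cast
    rw [hr, hN]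
    ring
  constructor
  · rintro ⟨h, hchain, hlast⟩ i
    have hle : ∀ d : ℕ, ∀ i : Fin m, (i : ℕ) + d + 1 = m → Hs i ≤ H := by
      intro d
      induction d with
      | zero =>
        intro i hi
        have e : i = ⟨m - 1, by omega⟩ := Fin.ext (by simp; omega)
        rw [e]
        exact hlast.le
      | succ d ih =>
        intro i hi
        let i' : Fin m := ⟨i + 1, by omega⟩
        exact (hchain i' i rfl).trans
          ((h i').2.2.2.2.2.2.2.2.trans (ih i' (by simp [i']; omega)))
    obtain ⟨hPt, hPB, hHB, hPd, hHd, hiso, hprP, hprH, hPH⟩ := h i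
    have hHs : Hs i = H ⊓ Ble Bi i := by
      refine Submodule.eq_of_le_of_finrank_eq
        (le_inf (hle (m - 1 - i) i (by omega)) hHB) ?_
      have := hK i
      omega
    rw [hHs] at hprH hPH
    have hmap : Submodule.map (LinearMap.proj i : (∀ j, Bi j) →ₗ[ℂ] Bi i) (P i) = Pt i := by
      refine Submodule.eq_of_le_of_finrank_le hprP ?_
      have h1 := finrank_eq_map_add_inf_ker
        (LinearMap.proj i : (∀ j, Bi j) →ₗ[ℂ] Bi i) (P i)
      have h2 := Submodule.finrank_mono (inf_le_inf_right
        (LinearMap.ker (LinearMap.proj i : (∀ j, Bi j) →ₗ[ℂ] Bi i)) hPH)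
      rw [hker] at h2
      have h3 := hN i
      omega
    have hPtE : Pt i = prI Bi i H ⊓ bperp (βi i) (prI Bi i H) := by
      refine Submodule.eq_of_le_of_finrank_eq (le_inf ?_ (le_bperp_comm (hrefl i) hprH)) ?_
      · rw [← hmap]
        exact Submodule.map_mono hPH
      · have := hr i
        omega
    refine ⟨hHs, hPtE, Submodule.eq_of_le_of_finrank_eq (le_inf hPH ?_) ?_⟩
    · rw [← hPtE]
      exact Submodule.map_le_iff_le_comap.1 hprP
    · have := hPdim i
      omega
  · intro h
    refine ⟨fun i => ?_, fun i j hij => ?_, ?_⟩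
    · obtain ⟨h1, h2, h3⟩ := h i
      rw [h1, h2, h3]
      refine ⟨hr i, inf_le_left.trans inf_le_right, inf_le_right, hPdim i, hK i, ?_,
        Submodule.map_le_iff_le_comap.2 inf_le_right,
        le_bperp_comm (hrefl i) inf_le_right, inf_le_left⟩
      exact fun v hv w hw => hv.2 w hw.1
    · rw [(h j).1, (h i).2.2]
      have hD : H ⊓ Ble Bi j = H ⊓ Dn Bi i := by rw [Ble_eq_Dn, hij]
      rw [hD, ← hker]
      exact inf_le_inf_left _ (LinearMap.ker_le_comap _)
    · rw [(h _).1, inf_eq_left, Ble_eq_Dn]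
      intro v _
      rw [mem_Dn]
      intro j hj
      have := j.2
      simp at hj
      omega
end
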